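/- arXiv:2204.01158 — 5 statements merged into one kernel-verified Lean document; each statement's English description precedes it below -/
import Mathlib

section
/- Let M be a field, σ : M → M a ring homomorphism, and L a subfield of M with σ(L) ⊆ L. Assume that M is a finite extension of L and that L is a finite extension of its subfield σ(L). Then M is a finite extension of σ(M) and [M : σ(M)] = [L : σ(L)]; moreover the separable degrees agree, [M : σ(M)]_sep = [L : σ(L)]_sep (equivalently, the purely inseparable degrees agree). (Part (1) of the lemma on the explicit definable measure on varieties.) -/
open scoped Classical

/-- The degree `[E : F]` of an extension of subfields of a common field,
via the inclusion-induced algebra structure (0 if `F ≰ E`). -/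
noncomputable def subfieldDeg {M : Type*} [Field M] (F E : Subfield M) : ℕ :=
  if h : F ≤ E then
    letI : Algebra F E := (Subfield.inclusion h).toAlgebra
    Module.finrank F E
  else 0

/-- The separable degree `[E : F]_sep` of an extension of subfields of a common
field (0 if `F ≰ E`). -/
noncomputable def subfieldSepDeg {M : Type*} [Field M] (F E : Subfield M) : ℕ :=
  if h : F ≤ E then
    letI : Algebra F E := (Subfield.inclusion h).toAlgebra
    Field.finSepDegree F E
  else 0

/-- `F ≤ E` and `E` is finite over `F` (for subfields of a common field). -/
def subfieldFinite {M : Type*} [Field M] (F E : Subfield M) : Prop :=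
  ∃ h : F ≤ E,
    letI : Algebra F E := (Subfield.inclusion h).toAlgebra
    FiniteDimensional F E

/-!
Since `σ` maps the extension `M / L` isomorphically onto `σ(M) / σ(L)`, both extensions have the
same degree. The tower law along `σ(L) ⊆ L ⊆ M` and along `σ(L) ⊆ σ(M) ⊆ M` therefore gives
`[M : L] · [L : σ(L)] = [M : σ(L)] = [M : L] · [M : σ(M)]`, and the finite nonzero factor `[M : L]`
cancels. The same computation works for separable degrees. In both cases the degrees may be taken
as cardinals, since a finite nonzero cardinal factor can be cancelled.
-/

universe u

section CardinalArithmetic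

open Cardinal

theorem cardinal_mul_right_strictMono {c : Cardinal} (hc₀ : c ≠ 0) (hc : c < ℵ₀) :
    StrictMono (c * ·) := by
  intro a b hab
  change c * a < c * b
  rcases lt_or_ge b ℵ₀ with hb | hb
  · lift c to ℕ using hc
    lift b to ℕ using hb
    lift a to ℕ using hab.trans natCast_lt_aleph0
    exact_mod_cast Nat.mul_lt_mul_of_pos_left (mod_cast hab) (Nat.pos_of_ne_zero (mod_cast hc₀))
  · rw [mul_eq_right hb (hc.le.trans hb) hc₀]
    exact mul_lt_of_lt hb (hc.trans_le hb) hab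

end CardinalArithmetic

section SeparableDegree

open Field

theorem sepDegree_ne_zero (F E : Type*) [Field F] [Field E] [Algebra F E] : sepDegree F E ≠ 0 :=
  rank_pos.ne'

theorem sepDegree_lt_aleph0 (F E : Type*) [Field F] [Field E] [Algebra F E]
    [FiniteDimensional F E] : sepDegree F E < Cardinal.aleph0 :=
  Module.rank_lt_aleph0 F (separableClosure F E)

theorem sepDegree_eq_of_equiv_equiv {F F' : Type*} {E E' : Type u} [Field F] [Field F']
    [Field E] [Field E'] [Algebra F E] [Algebra F' E'] (i : F ≃+* F') (j : E ≃+* E')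
    (hc : (algebraMap F' E').comp i.toRingHom = j.toRingHom.comp (algebraMap F E)) :
    sepDegree F E = sepDegree F' E' := by
  let _ : Algebra F F' := i.toRingHom.toAlgebra
  let _ : Algebra F E' := ((algebraMap F' E').comp i.toRingHom).toAlgebra
  have : IsScalarTower F F' E' := .of_algebraMap_eq fun _ => rfl
  have : IsPurelyInseparable F F' :=
    AlgEquiv.isPurelyInseparable (AlgEquiv.ofRingEquiv (f := i) fun _ => rfl)
  let jF : E ≃ₐ[F] E' := AlgEquiv.ofRingEquiv (f := j) fun x => (RingHom.congr_fun hc x).symm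
  calc
    sepDegree F E = sepDegree F E' := sepDegree_eq_of_equiv F E E' jF
    _ = sepDegree F' E' := sepDegree_eq_of_isPurelyInseparable F F' E'

end SeparableDegree

section SubfieldTower

open Field Subfield

variable {M : Type u} [Field M]

theorem sepDegree_extendScalars_mul_sepDegree {F E : Subfield M} (h : F ≤ E)
    [Algebra.IsAlgebraic F (extendScalars h)] :
    sepDegree F (extendScalars h) * sepDegree E M = sepDegree F M :=
  sepDegree_mul_sepDegree_of_isAlgebraic F (extendScalars h) M

theorem map_le_fieldRange {N : Type*} [Field N] (σ : M →+* N) (L : Subfield M) :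
    L.map σ ≤ σ.fieldRange :=
  σ.fieldRange_eq_map ▸ (gc_map_comap σ).monotone_l le_top

theorem isAlgebraic_map_fieldRange {N : Type*} [Field N] (σ : M →+* N) (L : Subfield M)
    [Algebra.IsAlgebraic L M] :
    Algebra.IsAlgebraic (L.map σ) (extendScalars (map_le_fieldRange σ L)) := by
  let i : L ≃+* L.map σ := L.equivMapOfInjective σ σ.injective
  let j : M ≃+* extendScalars (map_le_fieldRange σ L) := σ.rangeRestrictFieldEquiv
  exact (Algebra.isAlgebraic_ringHom_iff_of_comp_eq i j rfl).2 inferInstance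

theorem sepDegree_map_fieldRange {N : Type u} [Field N] (σ : M →+* N) (L : Subfield M) :
    sepDegree (L.map σ) (extendScalars (map_le_fieldRange σ L)) = sepDegree L M := by
  let i : L ≃+* L.map σ := L.equivMapOfInjective σ σ.injective
  let j : M ≃+* extendScalars (map_le_fieldRange σ L) := σ.rangeRestrictFieldEquiv
  exact (sepDegree_eq_of_equiv_equiv i j rfl).symm

theorem relrank_map_fieldRange {N : Type u} [Field N] (σ : M →+* N) (L : Subfield M) :
    relrank (L.map σ) σ.fieldRange = Module.rank L M := by
  rw [σ.fieldRange_eq_map, relrank_map_map, relrank_top_right]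

theorem rank_fieldRange_eq_rank_map (σ : M →+* M) {L : Subfield M} (hσL : L.map σ ≤ L)
    [FiniteDimensional L M] :
    Module.rank σ.fieldRange M = Module.rank (L.map σ) (extendScalars hσL) := by
  refine (cardinal_mul_right_strictMono rank_pos.ne' (Module.rank_lt_aleph0 L M)).injective ?_
  calc
    Module.rank L M * Module.rank σ.fieldRange M
      = relrank (L.map σ) σ.fieldRange * Module.rank σ.fieldRange M := by
        rw [relrank_map_fieldRange]
    _ = Module.rank (L.map σ) M := relrank_mul_rank_top (map_le_fieldRange σ L)
    _ = relrank (L.map σ) L * Module.rank L M := (relrank_mul_rank_top hσL).symm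
    _ = Module.rank L M * Module.rank (L.map σ) (extendScalars hσL) := by
        rw [relrank_eq_rank_of_le hσL, mul_comm]

theorem sepDegree_fieldRange_eq_sepDegree_map (σ : M →+* M) {L : Subfield M} (hσL : L.map σ ≤ L)
    [Algebra.IsAlgebraic L M] [Algebra.IsAlgebraic (L.map σ) (extendScalars hσL)]
    (hfin : sepDegree L M < Cardinal.aleph0) :
    sepDegree σ.fieldRange M = sepDegree (L.map σ) (extendScalars hσL) := by
  have := isAlgebraic_map_fieldRange σ L
  refine (cardinal_mul_right_strictMono (sepDegree_ne_zero L M) hfin).injective ?_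
  calc
    sepDegree L M * sepDegree σ.fieldRange M
      = sepDegree (L.map σ) (extendScalars (map_le_fieldRange σ L)) * sepDegree σ.fieldRange M := by
        rw [sepDegree_map_fieldRange]
    _ = sepDegree (L.map σ) M := sepDegree_extendScalars_mul_sepDegree (map_le_fieldRange σ L)
    _ = sepDegree (L.map σ) (extendScalars hσL) * sepDegree L M :=
        (sepDegree_extendScalars_mul_sepDegree hσL).symm
    _ = sepDegree L M * sepDegree (L.map σ) (extendScalars hσL) := mul_comm _ _

theorem subfieldDeg_of_le {F E : Subfield M} (h : F ≤ E) :
    subfieldDeg F E = Module.finrank F (extendScalars h) :=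
  dif_pos h

theorem subfieldSepDeg_of_le {F E : Subfield M} (h : F ≤ E) :
    subfieldSepDeg F E = finSepDegree F (extendScalars h) :=
  dif_pos h

theorem subfieldFinite_iff_of_le {F E : Subfield M} (h : F ≤ E) :
    subfieldFinite F E ↔ FiniteDimensional F (extendScalars h) :=
  exists_prop_of_true h

theorem finite_and_degrees_eq_of_rank_eq_of_sepDegree_eq {F' : Type*} {E' : Type u} [Field F']
    [Field E'] [Algebra F' E'] {F E : Subfield M} (h : F ≤ E)
    [FiniteDimensional F (extendScalars h)]
    (hrank : Module.rank F' E' = Module.rank F (extendScalars h))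
    (hsep : sepDegree F' E' = sepDegree F (extendScalars h)) :
    FiniteDimensional F' E' ∧ Module.finrank F' E' = subfieldDeg F E ∧
      finSepDegree F' E' = subfieldSepDeg F E := by
  have : FiniteDimensional F' E' :=
    Module.rank_lt_aleph0_iff.1 (hrank ▸ Module.rank_lt_aleph0 F (extendScalars h))
  refine ⟨this, ?_, ?_⟩
  · rw [subfieldDeg_of_le h, Module.finrank, Module.finrank, hrank]
  · rw [subfieldSepDeg_of_le h, finSepDegree_eq, finSepDegree_eq, hsep]

end SubfieldTower

theorem explicit_measure_part1_general {M : Type*} [Field M] (σ : M →+* M) (L : Subfield M)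
    (hσL : L.map σ ≤ L) [FiniteDimensional L M] :
    Module.rank σ.fieldRange M = Module.rank (L.map σ) (Subfield.extendScalars hσL) ∧
      (Algebra.IsAlgebraic (L.map σ) (Subfield.extendScalars hσL) →
        Field.sepDegree σ.fieldRange M =
          Field.sepDegree (L.map σ) (Subfield.extendScalars hσL)) :=
  ⟨rank_fieldRange_eq_rank_map σ hσL, fun _ =>
    sepDegree_fieldRange_eq_sepDegree_map σ hσL (sepDegree_lt_aleph0 L M)⟩

/-- if `σ : M → M` is a ring homomorphism, `L` a subfield with
`σ(L) ⊆ L`, `M` finite over `L` and `L` finite over `σ(L)`, then `M` is finite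
over `σ(M)`, with `[M : σ(M)] = [L : σ(L)]` and `[M : σ(M)]_sep = [L : σ(L)]_sep`. -/
theorem explicit_measure_part1 {M : Type*} [Field M] (σ : M →+* M) (L : Subfield M)
    (hσL : L.map σ ≤ L)
    (hML : FiniteDimensional L M)
    (hLσL : subfieldFinite (L.map σ) L) :
    FiniteDimensional σ.fieldRange M ∧
      Module.finrank σ.fieldRange M = subfieldDeg (L.map σ) L ∧
      Field.finSepDegree σ.fieldRange M = subfieldSepDeg (L.map σ) L := by
  have := (subfieldFinite_iff_of_le hσL).1 hLσL
  obtain ⟨hrank, hsep⟩ := explicit_measure_part1_general σ L hσL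
  exact finite_and_degrees_eq_of_rank_eq_of_sepDegree_eq hσL hrank (hsep inferInstance)
end

section
/- Let K be a field with an automorphism σ and A a subfield with σ(A) = A. Let L be a subfield of K with σ(L) = L which has finite transcendence degree over A and is finitely generated over A as an inversive difference field, i.e. L is the smallest subfield of K containing A and some finite set and closed under σ and σ^{-1}. Let M ⊆ K be a finite field extension of L with σ(M) ⊆ M. Then σ(M) = M, and there exist subfields L₀ ⊆ L and M₀ ⊆ M with σ(L₀) ⊆ L₀ and σ(M₀) ⊆ M₀, each of which is the smallest σ-stable subfield of K containing A and some finite set, such that M₀ is a finite field extension of L₀, the smallest subfield containing L₀ closed under σ and σ^{-1} equals L, and M₀·L = M, so that the smallest subfield containing M₀ closed under σ and σ^{-1} equals M. (Part (2) of the lemma on the explicit definable measure on varieties.) -/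
/-- The smallest `σ`-stable subfield of `K` containing the set `s`
(the difference subfield generated by `s`). -/
def diffGenBy {K : Type*} [Field K] (σ : K ≃+* K) (s : Set K) : Subfield K :=
  sInf {E : Subfield K | s ⊆ E ∧ ∀ x ∈ E, σ x ∈ E}

/-- The smallest subfield of `K` containing the set `s` and closed under `σ`
and `σ⁻¹` (the inversive difference subfield generated by `s`). -/
def invDiffGenBy {K : Type*} [Field K] (σ : K ≃+* K) (s : Set K) : Subfield K :=
  sInf {E : Subfield K | s ⊆ E ∧ (∀ x ∈ E, σ x ∈ E) ∧ ∀ x ∈ E, σ.symm x ∈ E}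

/-!
Comparing degrees in `σ(L) = L ⊆ σ(M) ⊆ M` gives `[M : σ(M)] = 1`, since `σ` induces an
isomorphism of the extensions `M / L` and `σ(M) / L`.

For the second part write `M = L(B)` with `B` finite. Only finitely many elements of `L` occur as
coefficients of the minimal polynomials over `L` of the elements of `B`, or in expressions for
`σ(b) ∈ L(B)`, `b ∈ B`. Once a difference subfield `L₀` of `L` contains these elements, `L₀(B)` is
finite over `L₀` and stable under `σ`; its inversive closure is `M` as soon as `L₀` also contains
generators of `L` over `A`.
-/

open Subfield (extendScalars)
open IntermediateField (adjoin)

section Extensions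

variable {K : Type*} [Field K]

theorem adjoin_toSubfield_eq_sup_closure (F : Subfield K) (S : Set K) :
    (adjoin F S).toSubfield = F ⊔ Subfield.closure S := by
  rw [IntermediateField.adjoin_toSubfield, Subfield.closure_union]
  congr 1
  exact (congrArg Subfield.closure Subtype.range_coe).trans F.closure_eq

theorem finiteDimensional_extendScalars_iff {F E : Subfield K} (h : F ≤ E) :
    FiniteDimensional F (extendScalars h) ↔
      ∃ B : Finset K, (∀ b ∈ B, IsIntegral F b) ∧ E = F ⊔ Subfield.closure (B : Set K) := by
  constructor
  · intro hfin
    obtain ⟨B, hB⟩ := (IntermediateField.essFiniteType_iff (K := extendScalars h)).1 inferInstance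
    refine ⟨B, fun b hb ↦ ?_, ?_⟩
    · have hbE : b ∈ extendScalars h := hB ▸ IntermediateField.subset_adjoin F _ hb
      exact (Algebra.IsIntegral.isIntegral (⟨b, hbE⟩ : extendScalars h)).map (extendScalars h).val
    · rw [← adjoin_toSubfield_eq_sup_closure, hB, Subfield.extendScalars_toSubfield]
  · rintro ⟨B, hB, hE⟩
    have hadjoin : extendScalars h = adjoin F (B : Set K) := by
      apply SetLike.coe_injective
      rw [Subfield.coe_extendScalars, hE, ← adjoin_toSubfield_eq_sup_closure]
      rfl
    rw [hadjoin]
    exact IntermediateField.finiteDimensional_adjoin hB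

theorem map_eq_of_map_le_of_finiteDimensional {L M : Subfield K} (f : K →+* K)
    (hL : L.map f = L) (hLM : L ≤ M) (hM : M.map f ≤ M)
    [FiniteDimensional L (extendScalars hLM)] : M.map f = M := by
  have hmap : L.relfinrank (M.map f) = L.relfinrank M := by
    conv_lhs => rw [← hL]
    exact Subfield.relfinrank_map_map L M f
  have htower : L.relfinrank (M.map f) * (M.map f).relfinrank M = L.relfinrank M :=
    Subfield.relfinrank_mul_relfinrank (hL.ge.trans ((Subfield.gc_map_comap f).monotone_l hLM)) hM
  have hpos : L.relfinrank M ≠ 0 := by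
    rw [Subfield.relfinrank_eq_finrank_of_le hLM]
    exact Module.finrank_pos.ne'
  rw [hmap] at htower
  exact hM.antisymm (Subfield.relfinrank_eq_one_iff.1 (mul_eq_left₀ hpos |>.1 htower))

theorem exists_finset_subset_closure_sup {L E : Subfield K} (T : Finset K)
    (hT : (T : Set K) ⊆ (L ⊔ E : Subfield K)) :
    ∃ c : Finset K, (c : Set K) ⊆ L ∧
      (T : Set K) ⊆ (Subfield.closure (c : Set K) ⊔ E : Subfield K) := by
  classical
  have mem_sup_iff (S : Set K) (x : K) : x ∈ Subfield.closure S ⊔ E ↔ x ∈ adjoin E S := by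
    rw [sup_comm, ← adjoin_toSubfield_eq_sup_closure]
    rfl
  have hfinite : ∀ x ∈ T, ∃ c : Finset K, (c : Set K) ⊆ L ∧ x ∈ adjoin E (c : Set K) := by
    intro x hx
    apply IntermediateField.exists_finset_of_mem_adjoin
    rw [← mem_sup_iff, L.closure_eq]
    exact hT hx
  choose! c hcL hc using hfinite
  refine ⟨T.biUnion c, by simpa using hcL, fun x hx ↦ ?_⟩
  exact (mem_sup_iff _ x).2 <|
    IntermediateField.adjoin.mono E _ _ (Finset.subset_biUnion_of_mem c hx) (hc x hx)

end Extensions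

section Integrality

variable {R : Type*} [CommRing R]

theorem isIntegral_of_coeffs_subset {p : Polynomial R} (hp : p.Monic) {x : R}
    (hx : p.IsRoot x) (S : Subring R) (hS : (p.coeffs : Set R) ⊆ S) : IsIntegral S x := by
  refine ⟨p.toSubring S hS, (Polynomial.monic_toSubring p S hS).2 hp, ?_⟩
  change Polynomial.eval₂ S.subtype x _ = 0
  rwa [Polynomial.eval₂_eq_eval_map, Polynomial.map_toSubring]

theorem exists_finset_forall_isIntegral (S : Subring R) (B : Finset R)
    (hB : ∀ b ∈ B, IsIntegral S b) :
    ∃ c : Finset R, (c : Set R) ⊆ S ∧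
      ∀ T : Subring R, (c : Set R) ⊆ T → ∀ b ∈ B, IsIntegral T b := by
  classical
  let p (b : R) : Polynomial R := (minpoly S b).map (algebraMap S R)
  refine ⟨B.biUnion fun b ↦ (p b).coeffs, ?_, fun T hT b hb ↦ ?_⟩
  · intro x hx
    obtain ⟨b, -, hxb⟩ := Finset.mem_biUnion.1 hx
    obtain ⟨n, -, rfl⟩ := Polynomial.mem_coeffs_iff.1 hxb
    rw [Polynomial.coeff_map]
    exact ((minpoly S b).coeff n).2
  · have hroot : (p b).IsRoot b := by
      rw [Polynomial.IsRoot.def, Polynomial.eval_map_algebraMap, minpoly.aeval]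
    exact isIntegral_of_coeffs_subset ((minpoly.monic (hB b hb)).map _) hroot T
      ((Finset.coe_subset.2 (Finset.subset_biUnion_of_mem (fun b ↦ (p b).coeffs) hb)).trans hT)

end Integrality

section DifferenceFields

variable {K : Type*} [Field K] {σ : K ≃+* K} {s t : Set K} {E : Subfield K}

theorem diffGenBy_le_iff (hE : E.map (σ : K →+* K) ≤ E) : diffGenBy σ s ≤ E ↔ s ⊆ E :=
  ⟨fun h ↦ Set.Subset.trans (fun _ hx ↦ Subfield.mem_sInf.2 fun _ hF ↦ hF.1 hx) h,
    fun h ↦ sInf_le ⟨h, Subfield.map_le_iff_le_comap.1 hE⟩⟩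

theorem map_diffGenBy_le : (diffGenBy σ s).map (σ : K →+* K) ≤ diffGenBy σ s :=
  Subfield.map_le_iff_le_comap.2 fun x hx ↦
    Subfield.mem_sInf.2 fun F hF ↦ hF.2 x (Subfield.mem_sInf.1 hx F hF)

theorem subset_diffGenBy : s ⊆ diffGenBy σ s :=
  (diffGenBy_le_iff map_diffGenBy_le).1 le_rfl

theorem diffGenBy_mono (h : s ⊆ t) : diffGenBy σ s ≤ diffGenBy σ t :=
  (diffGenBy_le_iff map_diffGenBy_le).2 (h.trans subset_diffGenBy)

theorem diffGenBy_union_eq_sup_closure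
    (h : σ '' t ⊆ (diffGenBy σ s ⊔ Subfield.closure t : Subfield K)) :
    diffGenBy σ (s ∪ t) = diffGenBy σ s ⊔ Subfield.closure t := by
  have hstable : (diffGenBy σ s ⊔ Subfield.closure t).map (σ : K →+* K) ≤
      diffGenBy σ s ⊔ Subfield.closure t := by
    rw [Subfield.map_sup, RingHom.map_field_closure]
    exact sup_le (map_diffGenBy_le.trans le_sup_left) (Subfield.closure_le.2 h)
  apply le_antisymm
  · exact (diffGenBy_le_iff hstable).2 <| Set.union_subset
      (subset_diffGenBy.trans (le_sup_left : diffGenBy σ s ≤ _))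
      (Subfield.closure_le.1 le_sup_right)
  · exact sup_le (diffGenBy_mono Set.subset_union_left)
      (Subfield.closure_le.2 (Set.subset_union_right.trans subset_diffGenBy))

theorem map_eq_self_iff_forall_mem :
    E.map (σ : K →+* K) = E ↔ (∀ x ∈ E, σ x ∈ E) ∧ ∀ x ∈ E, σ.symm x ∈ E := by
  rw [le_antisymm_iff, Subfield.map_le_iff_le_comap]
  refine and_congr Iff.rfl ⟨fun h x hx ↦ ?_, fun h x hx ↦ ⟨σ.symm x, h x hx, by simp⟩⟩
  obtain ⟨y, hy, rfl⟩ := h hx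
  simpa using hy

theorem invDiffGenBy_le_iff (hE : E.map (σ : K →+* K) = E) : invDiffGenBy σ s ≤ E ↔ s ⊆ E :=
  ⟨fun h ↦ Set.Subset.trans (fun _ hx ↦ Subfield.mem_sInf.2 fun _ hF ↦ hF.1 hx) h,
    fun h ↦ sInf_le ⟨h, map_eq_self_iff_forall_mem.1 hE⟩⟩

theorem map_invDiffGenBy : (invDiffGenBy σ s).map (σ : K →+* K) = invDiffGenBy σ s :=
  map_eq_self_iff_forall_mem.2
    ⟨fun x hx ↦ Subfield.mem_sInf.2 fun F hF ↦ hF.2.1 x (Subfield.mem_sInf.1 hx F hF),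
      fun x hx ↦ Subfield.mem_sInf.2 fun F hF ↦ hF.2.2 x (Subfield.mem_sInf.1 hx F hF)⟩

theorem subset_invDiffGenBy : s ⊆ invDiffGenBy σ s :=
  (invDiffGenBy_le_iff map_invDiffGenBy).1 le_rfl

theorem invDiffGenBy_mono (h : s ⊆ t) : invDiffGenBy σ s ≤ invDiffGenBy σ t :=
  (invDiffGenBy_le_iff map_invDiffGenBy).2 (h.trans subset_invDiffGenBy)

theorem diffGenBy_le_invDiffGenBy : diffGenBy σ s ≤ invDiffGenBy σ s :=
  (diffGenBy_le_iff map_invDiffGenBy.le).2 subset_invDiffGenBy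

theorem invDiffGenBy_diffGenBy : invDiffGenBy σ (diffGenBy σ s : Set K) = invDiffGenBy σ s :=
  le_antisymm ((invDiffGenBy_le_iff map_invDiffGenBy).2 diffGenBy_le_invDiffGenBy)
    (invDiffGenBy_mono subset_diffGenBy)

theorem invDiffGenBy_union_eq_self (h : t ⊆ invDiffGenBy σ s) :
    invDiffGenBy σ (s ∪ t) = invDiffGenBy σ s :=
  le_antisymm
    ((invDiffGenBy_le_iff map_invDiffGenBy).2 (Set.union_subset subset_invDiffGenBy h))
    (invDiffGenBy_mono Set.subset_union_left)

theorem invDiffGenBy_union_eq_sup_closure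
    (h : (invDiffGenBy σ s ⊔ Subfield.closure t).map (σ : K →+* K) =
      invDiffGenBy σ s ⊔ Subfield.closure t) :
    invDiffGenBy σ (s ∪ t) = invDiffGenBy σ s ⊔ Subfield.closure t := by
  apply le_antisymm
  · exact (invDiffGenBy_le_iff h).2 <| Set.union_subset
      (subset_invDiffGenBy.trans (le_sup_left : invDiffGenBy σ s ≤ _))
      (Subfield.closure_le.1 le_sup_right)
  · exact sup_le (invDiffGenBy_mono Set.subset_union_left)
      (Subfield.closure_le.2 (Set.subset_union_right.trans subset_invDiffGenBy))

theorem exists_finset_forall_diffGenBy_union_eq_sup_closure {L : Subfield K} (B : Finset K)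
    (hint : ∀ b ∈ B, IsIntegral L b)
    (hσB : σ '' B ⊆ (L ⊔ Subfield.closure (B : Set K) : Subfield K)) :
    ∃ c : Finset K, (c : Set K) ⊆ L ∧ ∀ S : Set K, (c : Set K) ⊆ S →
      (∀ b ∈ B, IsIntegral (diffGenBy σ S) b) ∧
        diffGenBy σ (S ∪ B) = diffGenBy σ S ⊔ Subfield.closure (B : Set K) := by
  classical
  obtain ⟨c, hcL, hc⟩ := exists_finset_forall_isIntegral L.toSubring B hint
  obtain ⟨d, hdL, hd⟩ := exists_finset_subset_closure_sup (B.image σ) (by simpa using hσB)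
  refine ⟨c ∪ d, by simpa using ⟨hcL, hdL⟩, fun S hS ↦ ?_⟩
  rw [Finset.coe_union, Set.union_subset_iff] at hS
  refine ⟨hc (diffGenBy σ S).toSubring (hS.1.trans subset_diffGenBy), ?_⟩
  apply diffGenBy_union_eq_sup_closure
  rw [← Finset.coe_image]
  exact hd.trans <| sup_le_sup_right (Subfield.closure_le.2 (hS.2.trans subset_diffGenBy)) _

end DifferenceFields

theorem explicit_measure_part2_general {K : Type*} [Field K] (σ : K ≃+* K) (A : Set K)
    (L : Subfield K) (hLfg : ∃ s : Finset K, L = invDiffGenBy σ (A ∪ ↑s))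
    (M : Subfield K) (hLM : L ≤ M) (hσM : M.map (σ : K →+* K) ≤ M)
    (hfin : letI : Algebra L M := (Subfield.inclusion hLM).toAlgebra
      FiniteDimensional L M) :
    M.map (σ : K →+* K) = M ∧
    ∃ (L₀ M₀ : Subfield K) (s t : Finset K),
      L₀ ≤ L ∧ M₀ ≤ M ∧
      L₀ = diffGenBy σ (A ∪ ↑s) ∧
      M₀ = diffGenBy σ (A ∪ ↑t) ∧
      (∃ h : L₀ ≤ M₀,
        letI : Algebra L₀ M₀ := (Subfield.inclusion h).toAlgebra
        FiniteDimensional L₀ M₀) ∧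
      invDiffGenBy σ (L₀ : Set K) = L ∧
      M₀ ⊔ L = M ∧
      invDiffGenBy σ (M₀ : Set K) = M := by
  classical
  obtain ⟨s, rfl⟩ := hLfg
  have : FiniteDimensional (invDiffGenBy σ (A ∪ ↑s)) (extendScalars hLM) := hfin
  have hM : M.map (σ : K →+* K) = M :=
    map_eq_of_map_le_of_finiteDimensional (σ : K →+* K) map_invDiffGenBy hLM hσM
  obtain ⟨B, hint, rfl⟩ := (finiteDimensional_extendScalars_iff hLM).1 this
  have hσB : σ '' B ⊆ (invDiffGenBy σ (A ∪ ↑s) ⊔ Subfield.closure (B : Set K) : Subfield K) :=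
    (Set.image_mono (Subfield.closure_le.1 le_sup_right)).trans hσM
  obtain ⟨c, hcL, hc⟩ := exists_finset_forall_diffGenBy_union_eq_sup_closure B hint hσB
  have hL : invDiffGenBy σ (A ∪ ↑s ∪ ↑c) = invDiffGenBy σ (A ∪ ↑s) :=
    invDiffGenBy_union_eq_self hcL
  obtain ⟨hint₀, hM₀⟩ := hc (A ∪ ↑s ∪ ↑c) Set.subset_union_right
  rw [← hL] at hM ⊢
  have hL₀M₀ : diffGenBy σ (A ∪ ↑s ∪ ↑c) ≤ diffGenBy σ (A ∪ ↑s ∪ ↑c ∪ ↑B) :=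
    diffGenBy_mono Set.subset_union_left
  refine ⟨hM, _, _, s ∪ c, s ∪ c ∪ B, diffGenBy_le_invDiffGenBy, ?_, ?_, ?_, ⟨hL₀M₀, ?_⟩,
    invDiffGenBy_diffGenBy, ?_, ?_⟩
  · rw [hM₀]
    exact sup_le_sup_right diffGenBy_le_invDiffGenBy _
  · simp [Set.union_assoc]
  · simp [Set.union_assoc]
  · exact (finiteDimensional_extendScalars_iff hL₀M₀).2 ⟨B, hint₀, hM₀⟩
  · rw [hM₀, sup_right_comm, sup_eq_right.2 diffGenBy_le_invDiffGenBy]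
  · rw [invDiffGenBy_diffGenBy, invDiffGenBy_union_eq_sup_closure hM]

/-- if `L` is an inversive difference subfield of `(K, σ)` of finite
transcendence degree over `A`, finitely generated over `A` as inversive difference
field, and `M ⊇ L` is a finite field extension with `σ(M) ⊆ M`, then `σ(M) = M`
and there are finitely generated difference subfields `L₀ ⊆ L`, `M₀ ⊆ M` with
`M₀/L₀` finite, `L₀^{inv} = L`, `M₀·L = M` and `M₀^{inv} = M`. -/
theorem explicit_measure_part2 {K : Type*} [Field K] (σ : K ≃+* K) (A : Subfield K)
    (hA : A.map (σ : K →+* K) = A)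
    (L : Subfield K) (hLinv : L.map (σ : K →+* K) = L)
    (hLtrdeg : ∃ t : Finset K, ∀ x ∈ L, IsAlgebraic ↥(A ⊔ Subfield.closure (t : Set K)) x)
    (hLfg : ∃ s : Finset K, L = invDiffGenBy σ ((A : Set K) ∪ ↑s))
    (M : Subfield K) (hLM : L ≤ M) (hσM : M.map (σ : K →+* K) ≤ M)
    (hfin : letI : Algebra L M := (Subfield.inclusion hLM).toAlgebra
      FiniteDimensional L M) :
    M.map (σ : K →+* K) = M ∧
    ∃ (L₀ M₀ : Subfield K) (s t : Finset K),
      L₀ ≤ L ∧ M₀ ≤ M ∧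
      L₀ = diffGenBy σ ((A : Set K) ∪ ↑s) ∧
      M₀ = diffGenBy σ ((A : Set K) ∪ ↑t) ∧
      (∃ h : L₀ ≤ M₀,
        letI : Algebra L₀ M₀ := (Subfield.inclusion h).toAlgebra
        FiniteDimensional L₀ M₀) ∧
      invDiffGenBy σ (L₀ : Set K) = L ∧
      M₀ ⊔ L = M ∧
      invDiffGenBy σ (M₀ : Set K) = M :=
  explicit_measure_part2_general σ A L hLfg M hLM hσM hfin
end

section
/- Let K be a field, B a subfield of K, and E, F subfields of K containing B which are linearly disjoint over B, with E algebraic over B. Let Ω be a field and let f : E → Ω and g : F → Ω be ring homomorphisms agreeing on B. Then there is a unique ring homomorphism h from the compositum E·F ⊆ K to Ω with h restricting to f on E and to g on F. (The amalgamation step used in the Claim of the Stochastic Independence Theorem, and in the proof of the lemma that only finite extensions necessary for φ matter.) -/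
/-- Subfields `E` and `F` of `K` containing `C` are linearly disjoint over `C`
if the multiplication map `E ⊗[C] F → K` is injective. -/
def LinearDisjointOver {K : Type*} [Field K] (C E F : Subfield K) : Prop :=
  (Submodule.span C (E : Set K)).LinearDisjoint (Submodule.span C (F : Set K))

/-!
Linear disjointness identifies `E ⊗[B] F` with the subring of `K` generated by `E` and `F`, and
this subring is already the field `E ⊔ F` because `E` is algebraic over `B`. Via `f` and `g`, which
agree on `B`, the target becomes a `B`-algebra in a single way, so the universal property of the
tensor product gives the common extension. It is unique because the elements at which two
homomorphisms on `E ⊔ F` agree form a subfield.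
-/

open scoped TensorProduct

section Subalgebra

variable {R S C : Type*} [CommSemiring R] [CommSemiring S] [Semiring C] [Algebra R S] [Algebra R C]
  {A₁ A₂ : Subalgebra R S}

/-- The common extension to `A₁ ⊔ A₂` of two algebra homomorphisms with commuting images, defined
on linearly disjoint subalgebras `A₁` and `A₂`; it sends `a₁ * a₂` to `f a₁ * g a₂`. -/
noncomputable def linearDisjointSupLift (H : A₁.LinearDisjoint A₂) (f : A₁ →ₐ[R] C)
    (g : A₂ →ₐ[R] C) (hfg : ∀ x y, Commute (f x) (g y)) : ↥(A₁ ⊔ A₂) →ₐ[R] C :=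
  (Algebra.TensorProduct.lift f g hfg).comp H.mulMap.symm

variable (H : A₁.LinearDisjoint A₂) (f : A₁ →ₐ[R] C) (g : A₂ →ₐ[R] C)
  (hfg : ∀ x y, Commute (f x) (g y))

theorem linearDisjointSupLift_mulMap (t : A₁ ⊗[R] A₂) :
    linearDisjointSupLift H f g hfg (H.mulMap t) = Algebra.TensorProduct.lift f g hfg t :=
  congrArg (Algebra.TensorProduct.lift f g hfg) (H.mulMap.symm_apply_apply t)

theorem linearDisjointSupLift_comp_inclusion_left :
    (linearDisjointSupLift H f g hfg).comp (Subalgebra.inclusion le_sup_left) = f := by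
  ext x
  have hx : Subalgebra.inclusion le_sup_left x = H.mulMap (x ⊗ₜ 1) := Subtype.ext (by simp)
  simp [hx, linearDisjointSupLift_mulMap]

theorem linearDisjointSupLift_comp_inclusion_right :
    (linearDisjointSupLift H f g hfg).comp (Subalgebra.inclusion le_sup_right) = g := by
  ext x
  have hx : Subalgebra.inclusion le_sup_right x = H.mulMap (1 ⊗ₜ x) := Subtype.ext (by simp)
  simp [hx, linearDisjointSupLift_mulMap]

end Subalgebra

theorem exists_algHom_sup_of_linearDisjoint {k K C : Type*} [Field k] [Field K] [Semiring C]
    [Algebra k K] [Algebra k C] {L M : IntermediateField k K} (H : L.LinearDisjoint M)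
    (halg : Algebra.IsAlgebraic k L ∨ Algebra.IsAlgebraic k M) (f : L →ₐ[k] C) (g : M →ₐ[k] C)
    (hfg : ∀ x y, Commute (f x) (g y)) :
    ∃ h : ↥(L ⊔ M) →ₐ[k] C,
      h.comp (IntermediateField.inclusion le_sup_left) = f ∧
      h.comp (IntermediateField.inclusion le_sup_right) = g := by
  have H' := IntermediateField.linearDisjoint_iff'.mp H
  have hsup := IntermediateField.sup_toSubalgebra_of_isAlgebraic L M halg
  exact ⟨(linearDisjointSupLift H' f g hfg).comp (Subalgebra.equivOfEq _ _ hsup).toAlgHom,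
    linearDisjointSupLift_comp_inclusion_left H' f g hfg,
    linearDisjointSupLift_comp_inclusion_right H' f g hfg⟩

theorem linearDisjointOver_iff_extendScalars {K : Type*} [Field K] {B E F : Subfield K}
    (hBE : B ≤ E) (hBF : B ≤ F) :
    LinearDisjointOver B E F ↔
      (Subfield.extendScalars hBE).LinearDisjoint (Subfield.extendScalars hBF) := by
  have span_eq {L : Subfield K} (hBL : B ≤ L) : Submodule.span B (L : Set K) =
      Subalgebra.toSubmodule (Subfield.extendScalars hBL).toSubalgebra :=
    Submodule.span_eq (Subalgebra.toSubmodule (Subfield.extendScalars hBL).toSubalgebra)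
  rw [LinearDisjointOver, span_eq hBE, span_eq hBF, IntermediateField.linearDisjoint_iff',
    Subalgebra.linearDisjoint_iff]

theorem ringHom_subfield_sup_ext {K Ω : Type*} [DivisionRing K] [Semiring Ω] {E F : Subfield K}
    {h₁ h₂ : ↥(E ⊔ F) →+* Ω}
    (hE : h₁.comp (Subfield.inclusion le_sup_left) = h₂.comp (Subfield.inclusion le_sup_left))
    (hF : h₁.comp (Subfield.inclusion le_sup_right) = h₂.comp (Subfield.inclusion le_sup_right)) :
    h₁ = h₂ := by
  have hle : E ⊔ F ≤ (h₁.eqLocusField h₂).map (E ⊔ F).subtype := sup_le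
    (fun x hx ↦ ⟨Subfield.inclusion le_sup_left ⟨x, hx⟩, RingHom.congr_fun hE ⟨x, hx⟩, rfl⟩)
    (fun x hx ↦ ⟨Subfield.inclusion le_sup_right ⟨x, hx⟩, RingHom.congr_fun hF ⟨x, hx⟩, rfl⟩)
  ext x
  obtain ⟨y, hy, hyx⟩ := hle x.2
  obtain rfl : y = x := Subtype.ext hyx
  exact hy

theorem exists_ringHom_sup_of_linearDisjointOver {K Ω : Type*} [Field K] [CommSemiring Ω]
    {B E F : Subfield K} (hBE : B ≤ E) (hBF : B ≤ F) (hdisj : LinearDisjointOver B E F)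
    (halg : ∀ x ∈ E, IsAlgebraic B x) (f : E →+* Ω) (g : F →+* Ω)
    (hfg : f.comp (Subfield.inclusion hBE) = g.comp (Subfield.inclusion hBF)) :
    ∃ h : ↥(E ⊔ F) →+* Ω,
      h.comp (Subfield.inclusion le_sup_left) = f ∧
      h.comp (Subfield.inclusion le_sup_right) = g := by
  let _ : Algebra B Ω := (f.comp (Subfield.inclusion hBE)).toAlgebra
  let fB : Subfield.extendScalars hBE →ₐ[B] Ω := { f with commutes' := fun _ ↦ rfl }
  let gB : Subfield.extendScalars hBF →ₐ[B] Ω :=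
    { g with commutes' := fun b ↦ (RingHom.congr_fun hfg b).symm }
  have hEalg : Algebra.IsAlgebraic B (Subfield.extendScalars hBE) :=
    ⟨fun x ↦ IntermediateField.isAlgebraic_iff.mpr (halg x x.2)⟩
  obtain ⟨h, hf, hg⟩ := exists_algHom_sup_of_linearDisjoint
    ((linearDisjointOver_iff_extendScalars hBE hBF).mp hdisj) (.inl hEalg) fB gB
    fun _ _ ↦ Commute.all _ _
  have hsup := Subfield.extendScalars_sup hBE hBF
  exact ⟨h.toRingHom.comp (IntermediateField.equivOfEq hsup.symm).toAlgHom.toRingHom,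
    congrArg AlgHom.toRingHom hf, congrArg AlgHom.toRingHom hg⟩

theorem amalgamation_of_ring_homs_general {K : Type*} [Field K] (B E F : Subfield K)
    (hBE : B ≤ E) (hBF : B ≤ F)
    (hdisj : LinearDisjointOver B E F)
    (halg : ∀ x ∈ E, IsAlgebraic B x)
    {Ω : Type*} [CommSemiring Ω] (f : E →+* Ω) (g : F →+* Ω)
    (hfg : ∀ (x : K) (hx : x ∈ B), f ⟨x, hBE hx⟩ = g ⟨x, hBF hx⟩) :
    ∃! h : ↥(E ⊔ F) →+* Ω,
      h.comp (Subfield.inclusion (le_sup_left : E ≤ E ⊔ F)) = f ∧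
      h.comp (Subfield.inclusion (le_sup_right : F ≤ E ⊔ F)) = g := by
  have hfgB : f.comp (Subfield.inclusion hBE) = g.comp (Subfield.inclusion hBF) :=
    RingHom.ext fun x ↦ hfg x x.2
  obtain ⟨h, hf, hg⟩ := exists_ringHom_sup_of_linearDisjointOver hBE hBF hdisj halg f g hfgB
  exact ⟨h, ⟨hf, hg⟩, fun h' ⟨hf', hg'⟩ ↦
    ringHom_subfield_sup_ext (hf'.trans hf.symm) (hg'.trans hg.symm)⟩

/-- amalgamation of ring homomorphisms over linearly disjoint
subfields, with `E/B` algebraic: homomorphisms `f : E → Ω`, `g : F → Ω`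
agreeing on `B` have a unique common extension to the compositum `E·F`. -/
theorem amalgamation_of_ring_homs {K : Type*} [Field K] (B E F : Subfield K)
    (hBE : B ≤ E) (hBF : B ≤ F)
    (hdisj : LinearDisjointOver B E F)
    (halg : ∀ x ∈ E, IsAlgebraic B x)
    {Ω : Type*} [Field Ω] (f : E →+* Ω) (g : F →+* Ω)
    (hfg : ∀ (x : K) (hx : x ∈ B), f ⟨x, hBE hx⟩ = g ⟨x, hBF hx⟩) :
    ∃! h : ↥(E ⊔ F) →+* Ω,
      h.comp (Subfield.inclusion (le_sup_left : E ≤ E ⊔ F)) = f ∧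
      h.comp (Subfield.inclusion (le_sup_right : F ≤ E ⊔ F)) = g :=
  amalgamation_of_ring_homs_general B E F hBE hBF hdisj halg f g hfg
end

section
/- Let K be a field, B a subfield of K, and E₁, …, E_k subfields of K containing B, each algebraic over B, such that for each j < k, E_{j+1} is linearly disjoint over B from the compositum E₁⋯E_j. Let Ω be a field and σ : B → Ω a ring homomorphism. Then the restriction map τ ↦ (τ|_{E₁}, …, τ|_{E_k}) is a bijection from the set of ring homomorphisms τ : E₁⋯E_k → Ω with τ|_B = σ onto the product over j = 1, …, k of the sets of ring homomorphisms τ_j : E_j → Ω with τ_j|_B = σ. (The counting principle N(⋀_u φ_u) = ∏_u N(φ_u) underlying the Stochastic Independence Theorem.) -/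
/-!
For `A` and `B` linearly disjoint over `F`, one of them algebraic, multiplication identifies
`A ⊗[F] B` with the field `A ⊔ B`, so a pair of `F`-algebra homomorphisms out of `A` and `B` extends
to `A ⊔ B`. Adjoining the members of a family in increasing order extends a tuple to every finite
subcompositum; these extensions are unique, hence compatible, and glue to the whole compositum.
A ring homomorphism extending `σ : B → Ω` is a `B`-algebra homomorphism for the `B`-algebra
structure on `Ω` given by `σ`.
-/

section AlgHom

open IntermediateField

variable {F K Ω ι : Type*} [Field F] [Field K] [Algebra F K] [CommSemiring Ω] [Algebra F Ω]

theorem comp_inclusion_comp_inclusion {A B C : IntermediateField F K} (f : C →ₐ[F] Ω)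
    (hBC : B ≤ C) (hAB : A ≤ B) :
    (f.comp (inclusion hBC)).comp (inclusion hAB) = f.comp (inclusion (hAB.trans hBC)) :=
  rfl

theorem algHom_ext_of_le_iSup {E : ι → IntermediateField F K} {L : IntermediateField F K}
    (hE : ∀ i, E i ≤ L) (hL : L ≤ ⨆ i, E i) {f g : L →ₐ[F] Ω}
    (h : ∀ i, f.comp (inclusion (hE i)) = g.comp (inclusion (hE i))) : f = g := by
  have hL_eq : L = adjoin F (⋃ i, E i) :=
    (le_antisymm hL (iSup_le hE)).trans (iSup_eq_adjoin F E)
  refine algHom_ext_of_eq_adjoin F hL_eq fun x hx => ?_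
  obtain ⟨i, hi⟩ := Set.mem_iUnion.1 hx
  exact DFunLike.congr_fun (h i) ⟨x, hi⟩

theorem exists_algHom_iSup_of_monotone [Preorder ι] [IsDirectedOrder ι] [Nonempty ι]
    {E : ι → IntermediateField F K} (hE : Monotone E) (f : ∀ i, E i →ₐ[F] Ω)
    (hf : ∀ i j (h : i ≤ j), (f j).comp (inclusion (hE h)) = f i) :
    ∃ g : ↥(⨆ i, E i) →ₐ[F] Ω, ∀ i, g.comp (inclusion (le_iSup E i)) = f i := by
  have hcompat (i j : ι) (h : E i ≤ E j) : f i = (f j).comp (inclusion h) := by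
    obtain ⟨k, hik, hjk⟩ := exists_ge_ge i j
    rw [← hf i k hik, ← hf j k hjk, comp_inclusion_comp_inclusion]
  exact ⟨Subalgebra.iSupLift (fun i => (E i).toSubalgebra) hE.directed_le f hcompat
      (⨆ i, E i).toSubalgebra (toSubalgebra_iSup_of_directed hE.directed_le).le,
    fun i => Subalgebra.iSupLift_comp_inclusion (K := fun i => (E i).toSubalgebra) (le_iSup E i)⟩

theorem exists_algHom_sup {A B : IntermediateField F K} (hdisj : A.LinearDisjoint B)
    (halg : Algebra.IsAlgebraic F A ∨ Algebra.IsAlgebraic F B) (f : A →ₐ[F] Ω) (g : B →ₐ[F] Ω) :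
    ∃ h : ↥(A ⊔ B) →ₐ[F] Ω,
      h.comp (inclusion le_sup_left) = f ∧ h.comp (inclusion le_sup_right) = g := by
  let e := (linearDisjoint_iff'.1 hdisj).mulMap.trans
    (Subalgebra.equivOfEq _ (A ⊔ B).toSubalgebra (sup_toSubalgebra_of_isAlgebraic A B halg).symm)
  have he_left (a : A) : e.symm (inclusion le_sup_left a) = a ⊗ₜ 1 :=
    e.symm_apply_eq.2 (Subtype.ext (mul_one (a : K)).symm)
  have he_right (b : B) : e.symm (inclusion le_sup_right b) = 1 ⊗ₜ b :=
    e.symm_apply_eq.2 (Subtype.ext (one_mul (b : K)).symm)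
  refine ⟨(Algebra.TensorProduct.productMap f g).comp e.symm.toAlgHom, ?_, ?_⟩
  · ext a
    simp [he_left]
  · ext b
    simp [he_right]

theorem isAlgebraic_finset_sup {E : ι → IntermediateField F K} {s : Finset ι}
    (h : ∀ i ∈ s, Algebra.IsAlgebraic F (E i)) : Algebra.IsAlgebraic F ↥(s.sup E) := by
  rw [Finset.sup_eq_iSup, iSup_subtype']
  exact isAlgebraic_iSup fun i => h i i.2

variable [LinearOrder ι] {E : ι → IntermediateField F K}
  (halg : Pairwise fun i j => Algebra.IsAlgebraic F (E i) ∨ Algebra.IsAlgebraic F (E j))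
  (hdisj : ∀ j, (E j).LinearDisjoint ↥(⨆ i < j, E i))

include halg hdisj

theorem exists_algHom_finset_sup (t : ∀ i, E i →ₐ[F] Ω) (s : Finset ι) :
    ∃ f : ↥(s.sup E) →ₐ[F] Ω, ∀ i (hi : i ∈ s), f.comp (inclusion (Finset.le_sup hi)) = t i := by
  induction s using Finset.induction_on_max with
  | empty => exact ⟨(Algebra.ofId F Ω).comp (botEquiv F K).toAlgHom, by simp⟩
  | insert j s hlt ih =>
    obtain ⟨f, hf⟩ := ih
    have hdisj_sup : (E j).LinearDisjoint ↥(s.sup E) :=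
      (hdisj j).of_le_right (Finset.sup_le fun i hi => le_iSup₂_of_le i (hlt i hi) le_rfl)
    have halg_sup : Algebra.IsAlgebraic F (E j) ∨ Algebra.IsAlgebraic F ↥(s.sup E) :=
      or_iff_not_imp_left.2 fun hj =>
        isAlgebraic_finset_sup fun i hi => (halg (hlt i hi).ne').resolve_left hj
    obtain ⟨g, hg_left, hg_right⟩ := exists_algHom_sup hdisj_sup halg_sup (t j) f
    refine ⟨g.comp (inclusion Finset.sup_insert.le), fun i hi => ?_⟩
    obtain rfl | his := Finset.mem_insert.1 hi
    · rw [comp_inclusion_comp_inclusion, hg_left]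
    · rw [← hf i his, ← hg_right]
      simp only [comp_inclusion_comp_inclusion]

theorem exists_algHom_iSup (t : ∀ i, E i →ₐ[F] Ω) :
    ∃ f : ↥(⨆ i, E i) →ₐ[F] Ω, ∀ i, f.comp (inclusion (le_iSup E i)) = t i := by
  choose f hf using exists_algHom_finset_sup halg hdisj t
  have hmono : Monotone fun s : Finset ι => s.sup E := fun _ _ => Finset.sup_mono
  have hcompat (s u : Finset ι) (h : s ≤ u) : (f u).comp (inclusion (hmono h)) = f s := by
    refine algHom_ext_of_le_iSup (E := fun i : s => E i) (fun i => Finset.le_sup i.2)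
      (Finset.sup_le fun i hi => le_iSup (fun i : s => E i) ⟨i, hi⟩) fun i => ?_
    rw [comp_inclusion_comp_inclusion, hf u i (h i.2), hf s i i.2]
  obtain ⟨g, hg⟩ := exists_algHom_iSup_of_monotone hmono f hcompat
  have hle (i : ι) : E i ≤ ({i} : Finset ι).sup E := Finset.le_sup (Finset.mem_singleton_self i)
  refine ⟨g.comp (inclusion (iSup_le fun i => le_iSup_of_le {i} (hle i))), fun i => ?_⟩
  rw [comp_inclusion_comp_inclusion, ← hf {i} i (Finset.mem_singleton_self i), ← hg {i},
    comp_inclusion_comp_inclusion]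

theorem bijective_algHom_restrict {L : IntermediateField F K} (hE : ∀ i, E i ≤ L)
    (hL : L ≤ ⨆ i, E i) :
    Function.Bijective fun (f : L →ₐ[F] Ω) (i : ι) => f.comp (inclusion (hE i)) := by
  refine ⟨fun f g h => algHom_ext_of_le_iSup hE hL (congrFun h), fun t => ?_⟩
  obtain ⟨f, hf⟩ := exists_algHom_iSup halg hdisj t
  exact ⟨f.comp (inclusion hL), funext hf⟩

end AlgHom

section Subfield

open Subfield

variable {K : Type*} [Field K] {B : Subfield K}

theorem linearDisjointOver_iff {A C : Subfield K} (hA : B ≤ A) (hC : B ≤ C) :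
    LinearDisjointOver B A C ↔ (extendScalars hA).LinearDisjoint (extendScalars hC) := by
  have hspan {D : Subfield K} (hD : B ≤ D) :
      Submodule.span B (D : Set K) = Subalgebra.toSubmodule (extendScalars hD).toSubalgebra :=
    Submodule.span_eq (Subalgebra.toSubmodule (extendScalars hD).toSubalgebra)
  rw [LinearDisjointOver, hspan hA, hspan hC, IntermediateField.linearDisjoint_iff']

theorem isAlgebraic_extendScalars {A : Subfield K} (hA : B ≤ A)
    (halg : ∀ x ∈ A, IsAlgebraic B x) : Algebra.IsAlgebraic B (extendScalars hA) :=
  ⟨fun x => IntermediateField.isAlgebraic_iff.2 (halg x x.2)⟩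

theorem extendScalars_sup_iSup_le {ι : Type*} {E : ι → Subfield K} (hBE : ∀ i, B ≤ E i) :
    extendScalars (le_sup_left : B ≤ B ⊔ ⨆ i, E i) ≤ ⨆ i, extendScalars (hBE i) := by
  rw [extendScalars_le_iff]
  refine sup_le (fun x hx => ?_) (iSup_le fun i => ?_)
  · exact (⨆ i, extendScalars (hBE i)).algebraMap_mem ⟨x, hx⟩
  · exact (extendScalars_le_iff (hBE i) _).1 (le_iSup (fun i => extendScalars (hBE i)) i)

/-- A ring homomorphism out of a field `A` containing `B` whose restriction to `B` is the structure
map, as a `B`-algebra homomorphism; `A` is seen as the intermediate field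
`extendScalars hA` to carry its `B`-algebra structure. -/
def ringHomToAlgHom {A : Subfield K} (hA : B ≤ A) {Ω : Type*} [CommSemiring Ω] [Algebra B Ω]
    (τ : A →+* Ω) (hτ : τ.comp (inclusion hA) = algebraMap B Ω) : extendScalars hA →ₐ[B] Ω :=
  { toRingHom := τ, commutes' := DFunLike.congr_fun hτ }

end Subfield

open Subfield in
theorem counting_extensions_general {K : Type*} [Field K] (B : Subfield K)
    {ι : Type*} [LinearOrder ι] (E : ι → Subfield K)
    (hBE : ∀ j, B ≤ E j)
    (halg : Pairwise fun i j => (∀ x ∈ E i, IsAlgebraic B x) ∨ ∀ x ∈ E j, IsAlgebraic B x)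
    (hdisj : ∀ j, LinearDisjointOver B (E j) (B ⊔ ⨆ i < j, E i))
    {Ω : Type*} [CommSemiring Ω] (σ : B →+* Ω) :
    Set.BijOn
      (fun (τ : ↥(B ⊔ ⨆ j, E j) →+* Ω) j =>
        τ.comp (inclusion ((le_iSup E j).trans le_sup_right)))
      {τ | τ.comp (inclusion le_sup_left) = σ}
      {t : ∀ j, E j →+* Ω | ∀ j, (t j).comp (inclusion (hBE j)) = σ} := by
  let _ : Algebra B Ω := σ.toAlgebra
  have halg_extendScalars : Pairwise fun i j => Algebra.IsAlgebraic B (extendScalars (hBE i)) ∨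
      Algebra.IsAlgebraic B (extendScalars (hBE j)) := fun i j hij =>
    (halg hij).imp (isAlgebraic_extendScalars _) (isAlgebraic_extendScalars _)
  have hdisj_extendScalars (j : ι) :
      (extendScalars (hBE j)).LinearDisjoint ↥(⨆ i < j, extendScalars (hBE i)) :=
    ((linearDisjointOver_iff (hBE j) le_sup_left).1 (hdisj j)).of_le_right <|
      iSup₂_le fun i hi => (le_iSup₂ (f := fun i (_ : i < j) => E i) i hi).trans le_sup_right
  have hle (j : ι) : extendScalars (hBE j) ≤ extendScalars (le_sup_left : B ≤ B ⊔ ⨆ j, E j) :=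
    (le_iSup E j).trans le_sup_right
  obtain ⟨hinj, hsurj⟩ := bijective_algHom_restrict (Ω := Ω) halg_extendScalars
    hdisj_extendScalars hle (extendScalars_sup_iSup_le hBE)
  refine ⟨fun τ hτ j => ?_, fun τ₁ h₁ τ₂ h₂ h => ?_, fun t ht => ?_⟩
  · exact RingHom.ext (DFunLike.congr_fun hτ)
  · have h_algHom : ringHomToAlgHom le_sup_left τ₁ h₁ = ringHomToAlgHom le_sup_left τ₂ h₂ :=
      hinj (funext fun j => AlgHom.ext fun x => DFunLike.congr_fun (congrFun h j) x)
    exact congrArg AlgHom.toRingHom h_algHom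
  · obtain ⟨f, hf⟩ := hsurj fun j => ringHomToAlgHom (hBE j) (t j) (ht j)
    refine ⟨f.toRingHom, RingHom.ext f.commutes, ?_⟩
    exact funext fun j => congrArg AlgHom.toRingHom (congrFun hf j)

/-- if `E₁, …, E_k` are algebraic extensions of `B` inside `K`,
each linearly disjoint over `B` from the compositum of the previous ones, then
restriction gives a bijection between ring homomorphisms `E₁⋯E_k → Ω` extending
`σ : B → Ω` and tuples of ring homomorphisms `E_j → Ω` extending `σ`. -/
theorem counting_extensions {K : Type*} [Field K] (B : Subfield K) (k : ℕ)
    (E : Fin k → Subfield K)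
    (hBE : ∀ j, B ≤ E j)
    (halg : ∀ j, ∀ x ∈ E j, IsAlgebraic B x)
    (hdisj : ∀ j : Fin k,
      LinearDisjointOver B (E j) (B ⊔ ⨆ i : Fin k, ⨆ _ : (i : ℕ) < (j : ℕ), E i))
    {Ω : Type*} [Field Ω] (σ : B →+* Ω) :
    Set.BijOn
      (fun τ : ↥(B ⊔ ⨆ j, E j) →+* Ω => fun j : Fin k =>
        τ.comp (Subfield.inclusion (le_trans (le_iSup E j)
          (le_sup_right : (⨆ j, E j) ≤ B ⊔ ⨆ j, E j))))
      {τ : ↥(B ⊔ ⨆ j, E j) →+* Ω |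
        τ.comp (Subfield.inclusion (le_sup_left : B ≤ B ⊔ ⨆ j, E j)) = σ}
      {t : ∀ j : Fin k, ↥(E j) →+* Ω | ∀ j, (t j).comp (Subfield.inclusion (hBE j)) = σ} :=
  counting_extensions_general B E hBE (fun i _ _ => .inl (halg i)) hdisj σ
end

section
/- Let S be an I-system of difference fields on V over A, where I is a simplicial complex on V. Fix u ⊆ V and let J be any collection of subsets of V. Then the composite S(V)·∏_{v∈J∪I_u} S(v)^{alg} is linearly disjoint from S(u)^{alg} over S(u)·∏_{v∈J_u∪I_u} S(v)^{alg}. (Lemma 'linear disjointness in systems'.) -/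
/-- The relative algebraic closure `E^{alg}` of a subfield `E` inside `K`. -/
def algCl {K : Type*} [Field K] (E : Subfield K) : Subfield K :=
  Subfield.closure {x : K | IsAlgebraic E x}

/-- The inversive closure `E^{inv}`: the smallest subfield of `K` containing `E`
closed under `σ` and `σ⁻¹`. -/
def invCl {K : Type*} [Field K] (σ : K ≃+* K) (E : Subfield K) : Subfield K :=
  sInf {F : Subfield K | E ≤ F ∧ (∀ x ∈ F, σ x ∈ F) ∧ ∀ x ∈ F, σ.symm x ∈ F}

/-- `E` and `F` are independent over `C`: `((E·C)^{inv})^{alg}` and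
`((F·C)^{inv})^{alg}` are linearly disjoint over `(C^{inv})^{alg}`. -/
def IndependentOver {K : Type*} [Field K] (σ : K ≃+* K) (C E F : Subfield K) : Prop :=
  LinearDisjointOver (algCl (invCl σ C)) (algCl (invCl σ (E ⊔ C))) (algCl (invCl σ (F ⊔ C)))

/-- `F ≤ E` and `E/F` is a finite Galois extension (of subfields of `K`). -/
def IsFiniteGaloisExt {K : Type*} [Field K] (F E : Subfield K) : Prop :=
  ∃ h : F ≤ E,
    letI : Algebra F E := (Subfield.inclusion h).toAlgebra
    FiniteDimensional F E ∧ IsGalois F E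

/-- `I_u = {v ∩ u : v ∈ I}`. -/
def interFamily {V : Type*} [DecidableEq V] (I : Set (Finset V)) (u : Finset V) :
    Set (Finset V) :=
  {w | ∃ v ∈ I, w = v ∩ u}

/-- A system of difference fields on `V` over `A` inside `(K, σ)`. -/
structure DiffFieldSystem {K : Type*} [Field K] (σ : K ≃+* K)
    (V : Type*) [Fintype V] [DecidableEq V] (A : Subfield K) where
  /-- the underlying map from subsets of `V` to subfields of `K` -/
  S : Finset V → Subfield K
  mono : ∀ {u v : Finset V}, u ⊆ v → S u ≤ S v
  empty_eq : S ∅ = A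
  sigma_stable : ∀ u : Finset V, ∀ x ∈ S u, σ x ∈ S u
  perfect : ∀ u : Finset V, PerfectField (S u)
  /-- each `S u` has finite transcendence degree over `A` -/
  fin_trdeg : ∀ u : Finset V, ∃ t : Finset K,
    ∀ x ∈ S u, IsAlgebraic ↥(A ⊔ Subfield.closure (t : Set K)) x
  /-- each `S u` is the perfect closure of a difference subfield generated over
  `A` by a finite set (i.e. the smallest perfect `σ`-stable subfield of `K`
  containing `A` and that finite set) -/
  fin_gen : ∀ u : Finset V, ∃ t : Finset K,
    (A ≤ S u ∧ (t : Set K) ⊆ S u) ∧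
    ∀ F : Subfield K, A ≤ F → (t : Set K) ⊆ F → (∀ x ∈ F, σ x ∈ F) →
      PerfectField F → S u ≤ F
  /-- the family `(S {i})_{i ∈ V}` is independent over `A` -/
  indep : ∀ I₁ I₂ : Finset V, Disjoint I₁ I₂ →
    IndependentOver σ A (A ⊔ ⨆ i ∈ I₁, S {i}) (A ⊔ ⨆ i ∈ I₂, S {i})
  /-- for `|u| ≥ 2`, `S u` is a finite Galois extension of
  `S(u)⁻ = ∏_{v ∈ P(u)⁻} S v` -/
  galois : ∀ u : Finset V, 2 ≤ u.card →
    IsFiniteGaloisExt (⨆ v ∈ u.powerset.erase u, S v) (S u)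

namespace DiffFieldSystem

variable {K : Type*} [Field K] {σ : K ≃+* K}
variable {V : Type*} [Fintype V] [DecidableEq V] {A : Subfield K}

/-- `S(u)⁻ = ∏_{v ∈ P(u)⁻} S(v)`. -/
def Sminus (𝒮 : DiffFieldSystem σ V A) (u : Finset V) : Subfield K :=
  ⨆ v ∈ u.powerset.erase u, 𝒮.S v

/-- `𝒮` is an `I`-system: `S u = S(u)⁻` for `u ∉ I`. -/
def IsOn (𝒮 : DiffFieldSystem σ V A) (I : Set (Finset V)) : Prop :=
  ∀ u : Finset V, u ∉ I → 𝒮.S u = 𝒮.Sminus u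

/-- `𝒮` is regular: for every nonempty `u`, `S u` is linearly disjoint from
`∏_{v ∈ P(u)⁻} S(v)^{alg}` over `∏_{v ∈ P(u)⁻} S(v)`. -/
def Regular (𝒮 : DiffFieldSystem σ V A) : Prop :=
  ∀ u : Finset V, u ≠ ∅ →
    LinearDisjointOver (𝒮.Sminus u) (𝒮.S u) (⨆ v ∈ u.powerset.erase u, algCl (𝒮.S v))

end DiffFieldSystem

/-- `I` is a simplicial complex on `V`: downward closed with union all of `V`. -/
def IsSimplicialComplexOn (V : Type*) [DecidableEq V] (I : Set (Finset V)) : Prop :=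
  (∀ u ∈ I, ∀ v : Finset V, v ⊆ u → v ∈ I) ∧ ∀ i : V, ∃ u ∈ I, i ∈ u

/-! Put `k = algCl A`, `P = algCl (S u)` and `Q = algCl (S uᶜ)`; independence makes `P` and `Q`
linearly disjoint over the algebraically closed field `k`. By the Nullstellensatz `Q` maps to an
ultrapower `k^φ` of `k`. Inside `K^φ` the constants are linearly disjoint from `C^φ` over `C` for
every subfield `C` of `K`, so `P ⊗[k] Q` embeds into both `K` and `K^φ` (with `P` constant), and
`K` and `K^φ` can be amalgamated over it: there is a field `Ω` with embeddings `Φ : K → Ω` and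
`Ψ : K^φ → Ω` which agree on `P` and satisfy `Φ Q ≤ Ψ (k^φ)`.

If `k ≤ D ≤ P` and `D` is algebraically closed, so is `D^φ`; hence `Φ (algCl (D ⊔ Q)) ≤ Ψ (D^φ)`.
For a family of such `D j` with composite `C`, it follows that `Φ` maps the composite of the
`algCl (D j ⊔ Q)` into `Ψ (C^φ)`, which is linearly disjoint from `Φ P = Ψ P` over `C`.
The theorem is the case `D v = algCl (S (v ∩ u))`, because
`S v ≤ algCl (S (v ∩ u) ⊔ S uᶜ)`.
-/

open Filter
open scoped TensorProduct

section AlgebraicClosure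

variable {K L : Type*} [Field K] [Field L]

lemma algCl_eq_toSubfield (E : Subfield K) : algCl E = (algebraicClosure E K).toSubfield := by
  have h : {x : K | IsAlgebraic E x} = (algebraicClosure E K).toSubfield :=
    Set.ext fun _ ↦ mem_algebraicClosure_iff.symm
  rw [algCl, h, Subfield.closure_eq]

lemma mem_algCl {E : Subfield K} {x : K} : x ∈ algCl E ↔ IsAlgebraic E x := by
  rw [algCl_eq_toSubfield]
  exact mem_algebraicClosure_iff

lemma le_algCl (E : Subfield K) : E ≤ algCl E :=
  fun x hx ↦ mem_algCl.2 (isAlgebraic_algebraMap (⟨x, hx⟩ : E))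

lemma map_algCl_le (f : K →+* L) (E : Subfield K) : (algCl E).map f ≤ algCl (E.map f) := by
  rintro _ ⟨x, hx, rfl⟩
  let fE : E →+* E.map f := f.restrict E (E.map f) fun y hy ↦ ⟨y, hy, rfl⟩
  exact mem_algCl.2 ((mem_algCl.1 hx).ringHom_of_comp_eq fE f fE.injective rfl)

lemma algCl_mono : Monotone (algCl (K := K)) := fun _ _ h _ hx ↦
  mem_algCl.2 ((mem_algCl.1 hx).ringHom_of_comp_eq (Subfield.inclusion h) (RingHom.id K)
    (RingHom.injective _) rfl)

lemma algCl_algCl (E : Subfield K) : algCl (algCl E) = algCl E := by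
  refine le_antisymm (fun x hx ↦ mem_algCl.2 ?_) (le_algCl _)
  rw [mem_algCl, algCl_eq_toSubfield] at hx
  exact IsAlgebraic.restrictScalars (S := algebraicClosure E K) E hx

lemma algCl_le_algCl {E F : Subfield K} (h : E ≤ algCl F) : algCl E ≤ algCl F :=
  (algCl_mono h).trans_eq (algCl_algCl F)

lemma algCl_fieldRange (f : K →+* L) [IsAlgClosed K] : algCl f.fieldRange = f.fieldRange := by
  refine le_antisymm (fun x hx ↦ ?_) (le_algCl _)
  let _ := f.toAlgebra
  have hxK : x ∈ algebraicClosure K L := mem_algebraicClosure_iff.2 <|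
    (mem_algCl.1 hx).of_ringHom_of_comp_eq f.rangeRestrictField (RingHom.id L)
      f.rangeRestrictField_bijective.surjective Function.injective_id rfl
  rw [IntermediateField.eq_bot_of_isAlgClosed_of_isAlgebraic (algebraicClosure K L)] at hxK
  exact IntermediateField.mem_bot.1 hxK

lemma isAlgClosed_algCl [IsAlgClosed K] (E : Subfield K) : IsAlgClosed (algCl E) := by
  rw [algCl_eq_toSubfield]
  exact (algebraicClosure.isAlgClosure E K).isAlgClosed

end AlgebraicClosure

section LinearDisjointness

variable {K L : Type*} [Field K] [Field L]

lemma linearDisjointOver_iff_intermediateField {C E F : Subfield K} (hE : C ≤ E) (hF : C ≤ F) :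
    LinearDisjointOver C E F ↔
      (Subfield.extendScalars hE).LinearDisjoint (Subfield.extendScalars hF) := by
  have span_eq {G : Subfield K} (hG : C ≤ G) : Submodule.span C (G : Set K) =
      (Subfield.extendScalars hG).toSubalgebra.toSubmodule :=
    Submodule.span_eq (Subfield.extendScalars hG).toSubalgebra.toSubmodule
  rw [LinearDisjointOver, span_eq hE, span_eq hF, IntermediateField.linearDisjoint_iff',
    Subalgebra.linearDisjoint_iff]

lemma LinearDisjointOver.mono {C E E' F F' : Subfield K} (h : LinearDisjointOver C E F)
    (hE : E' ≤ E) (hF : F' ≤ F) : LinearDisjointOver C E' F' :=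
  h.of_le_of_flat_right (Submodule.span_mono hE) (Submodule.span_mono hF)

lemma linearDisjointOver_iff_linearIndepOn {C E F : Subfield K} (hE : C ≤ E) (hF : C ≤ F) :
    LinearDisjointOver C E F ↔
      ∀ s : Set K, s ⊆ E → LinearIndepOn C id s → LinearIndepOn F id s := by
  rw [linearDisjointOver_iff_intermediateField hE hF]
  let E' := Subfield.extendScalars hE
  refine ⟨fun h s hs hind ↦ ?_, fun h ↦ ?_⟩
  · have hind' : LinearIndependent C fun x : s ↦ (⟨x, hs x.2⟩ : E') :=
      .of_comp E'.val.toLinearMap hind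
    exact h.linearIndependent_left hind'
  · let b := Module.Basis.ofVectorSpace C E'
    have hb : LinearIndependent C fun i ↦ (b i : K) :=
      b.linearIndependent.map' E'.val.toLinearMap
        (LinearMap.ker_eq_bot.2 Subtype.val_injective)
    have hb' := h (Set.range fun i ↦ (b i : K)) (by rintro _ ⟨i, rfl⟩; exact (b i).2)
      hb.linearIndepOn_id
    exact .of_basis_left b ((linearIndepOn_id_range_iff hb.injective).1 hb')

lemma monotone_map_subfield (f : K →+* L) : Monotone (Subfield.map f) :=
  (Subfield.gc_map_comap f).monotone_l

lemma linearIndependent_map_subfield {C : Subfield K} {ι : Type*} {a : ι → K} (f : K →+* L)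
    (h : LinearIndependent C a) : LinearIndependent (C.map f) (f ∘ a) := by
  let fC : C →+* C.map f := f.restrict C (C.map f) fun y hy ↦ ⟨y, hy, rfl⟩
  have hfC : Function.Surjective fC := by
    rintro ⟨_, y, hy, rfl⟩
    exact ⟨⟨y, hy⟩, rfl⟩
  exact h.map_of_surjective_injective fC f.toAddMonoidHom hfC
    (fun m ↦ (map_eq_zero f).1) (fun c m ↦ f.map_mul c m)

lemma linearIndependent_of_map_subfield {C : Subfield K} {ι : Type*} {a : ι → K} (f : K →+* L)
    (h : LinearIndependent (C.map f) (f ∘ a)) : LinearIndependent C a := by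
  rw [linearIndependent_iff'] at h ⊢
  intro s c hc i hi
  have hfc : ∑ i ∈ s, (⟨f (c i), c i, (c i).2, rfl⟩ : C.map f) • (f ∘ a) i = 0 := by
    rw [← map_zero f, ← hc, map_sum]
    exact Finset.sum_congr rfl fun i _ ↦ (f.map_mul (c i) (a i)).symm
  have hfci : f (c i) = 0 := congrArg Subtype.val (h s _ hfc i hi)
  exact Subtype.ext ((map_eq_zero f).1 hfci)

lemma linearIndepOn_image_map_subfield {C : Subfield K} {s : Set K} (f : K →+* L) :
    LinearIndepOn (C.map f) id (f '' s) ↔ LinearIndepOn C id s := by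
  rw [← linearIndepOn_iff_image (f := f) f.injective.injOn]
  exact ⟨linearIndependent_of_map_subfield f, linearIndependent_map_subfield f⟩

lemma linearDisjointOver_map_iff {C E F : Subfield K} (f : K →+* L) (hE : C ≤ E) (hF : C ≤ F) :
    LinearDisjointOver (C.map f) (E.map f) (F.map f) ↔ LinearDisjointOver C E F := by
  rw [linearDisjointOver_iff_linearIndepOn hE hF,
    linearDisjointOver_iff_linearIndepOn (monotone_map_subfield f hE) (monotone_map_subfield f hF),
    Subfield.coe_map, Set.forall_subset_image_iff]
  simp only [linearIndepOn_image_map_subfield]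

end LinearDisjointness

section Ultrapower

variable {ι : Type*} {l : Filter ι} {R A B : Type*}

/-- The algebra structure on germs along `l` for which the structure map sends a scalar to the
germ of a constant function, i.e. the diagonal embedding when `l` is an ultrafilter. -/
noncomputable instance germAlgebra [CommSemiring R] [Semiring A] [Algebra R A] :
    Algebra R (Germ l A) :=
  Algebra.ofModule
    (fun r x y ↦ Germ.inductionOn₂ x y fun f g ↦ congrArg _ (smul_mul_assoc r f g))
    (fun r x y ↦ Germ.inductionOn₂ x y fun f g ↦ congrArg _ (mul_smul_comm r f g))

lemma algebraMap_germ [CommSemiring R] [Semiring A] [Algebra R A] (r : R) :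
    algebraMap R (Germ l A) r = ((fun _ ↦ algebraMap R A r : ι → A) : Germ l A) := by
  rw [Algebra.algebraMap_eq_smul_one]
  exact congrArg _ (funext fun _ ↦ (Algebra.algebraMap_eq_smul_one r).symm)

/-- The homomorphism of germs obtained by applying an algebra homomorphism pointwise. -/
noncomputable def germMap (l : Filter ι) [CommSemiring R] [Semiring A] [Algebra R A] [Semiring B]
    [Algebra R B] (f : A →ₐ[R] B) : Germ l A →ₐ[R] Germ l B where
  toFun := Germ.map f
  map_one' := congrArg _ (funext fun _ ↦ map_one f)
  map_mul' x y := Germ.inductionOn₂ x y fun _ _ ↦ congrArg _ (funext fun _ ↦ map_mul f _ _)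
  map_zero' := congrArg _ (funext fun _ ↦ map_zero f)
  map_add' x y := Germ.inductionOn₂ x y fun _ _ ↦ congrArg _ (funext fun _ ↦ map_add f _ _)
  commutes' r := by
    rw [algebraMap_germ, algebraMap_germ]
    exact congrArg _ (funext fun _ ↦ f.commutes r)

lemma isAlgClosed_germ {k : Type*} [Field k] [IsAlgClosed k] (φ : Ultrafilter ι) :
    IsAlgClosed (Germ (φ : Filter ι) k) := by
  refine IsAlgClosed.of_exists_root _ fun p hp hirr ↦ ?_
  have hlift : p ∈ Polynomial.lifts (Germ.coeRingHom (R := k) (φ : Filter ι)) :=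
    (Polynomial.lifts_iff_coeff_lifts p).2 fun n ↦
      Germ.inductionOn (p.coeff n) fun f ↦ ⟨f, rfl⟩
  obtain ⟨q, hq, hdeg, hmonic⟩ := Polynomial.lifts_and_natDegree_eq_and_monic hlift hp
  have hroot (t : ι) : ∃ r, (q.map (Pi.evalRingHom (fun _ ↦ k) t)).eval r = 0 := by
    refine IsAlgClosed.exists_root _ (Polynomial.natDegree_pos_iff_degree_pos.1 ?_).ne'
    rw [hmonic.natDegree_map, hdeg]
    exact hirr.natDegree_pos
  choose r hr using hroot
  have hqr : q.eval r = 0 := funext fun t ↦ by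
    have := hr t
    rwa [← Pi.evalRingHom_apply (fun _ ↦ k) t r, Polynomial.eval_map_apply] at this
  exact ⟨Germ.coeRingHom (φ : Filter ι) r, by rw [← hq, Polynomial.eval_map_apply, hqr, map_zero]⟩

variable {K : Type*} [Field K] (φ : Ultrafilter ι)

/-- The ultrapower of a subfield `C` of `K`, as a subfield of the ultrapower of `K`. -/
noncomputable def ultrapower (C : Subfield K) : Subfield (Germ (φ : Filter ι) K) :=
  (germMap (φ : Filter ι) (Algebra.ofId C K)).toRingHom.fieldRange

variable {φ}

lemma mem_ultrapower {C : Subfield K} {x : Germ (φ : Filter ι) K} :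
    x ∈ ultrapower φ C ↔
      ∃ c : ι → C, ((fun t ↦ (c t : K) : ι → K) : Germ (φ : Filter ι) K) = x := by
  refine RingHom.mem_fieldRange.trans ⟨?_, fun ⟨c, hc⟩ ↦ ⟨(c : Germ (φ : Filter ι) C), hc⟩⟩
  rintro ⟨y, rfl⟩
  exact Germ.inductionOn y fun c ↦ ⟨c, rfl⟩

lemma ultrapower_mono : Monotone (ultrapower φ : Subfield K → _) := by
  intro C D h x hx
  obtain ⟨c, rfl⟩ := mem_ultrapower.1 hx
  exact mem_ultrapower.2 ⟨fun t ↦ ⟨c t, h (c t).2⟩, rfl⟩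

lemma map_algebraMap_le_ultrapower (C : Subfield K) :
    C.map (algebraMap K (Germ (φ : Filter ι) K)) ≤ ultrapower φ C := by
  rintro _ ⟨x, hx, rfl⟩
  exact mem_ultrapower.2 ⟨fun _ ↦ ⟨x, hx⟩, (algebraMap_germ x).symm⟩

lemma algCl_map_ultrapower {L : Type*} [Field L] (Ψ : Germ (φ : Filter ι) K →+* L)
    (C : Subfield K) [IsAlgClosed C] :
    algCl ((ultrapower φ C).map Ψ) = (ultrapower φ C).map Ψ := by
  have := isAlgClosed_germ (k := C) φ
  rw [ultrapower, RingHom.map_fieldRange, algCl_fieldRange]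

lemma linearIndependent_ultrapower {C : Subfield K} {κ : Type*} {a : κ → K}
    (h : LinearIndependent C a) :
    LinearIndependent (ultrapower φ C) (algebraMap K (Germ (φ : Filter ι) K) ∘ a) := by
  rw [linearIndependent_iff'] at h ⊢
  intro s c hc i hi
  choose d hd using fun i ↦ mem_ultrapower.1 (c i).2
  have hzero : ∀ᶠ t in (φ : Filter ι), ∑ i ∈ s, d i t • a i = 0 := by
    have hsum : Germ.coeRingHom (φ : Filter ι) (∑ i ∈ s, fun t ↦ d i t • a i) = 0 := by
      rw [map_sum, ← hc]
      refine Finset.sum_congr rfl fun i _ ↦ ?_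
      rw [Function.comp_apply, Subfield.smul_def, algebraMap_germ, ← hd i]
      rfl
    filter_upwards [Germ.coe_eq.1 hsum] with t ht
    rwa [Finset.sum_apply] at ht
  refine Subtype.ext ((hd i).symm.trans (Germ.coe_eq.2 ?_))
  filter_upwards [hzero] with t ht
  exact congrArg Subtype.val (h s (fun i ↦ d i t) ht i hi)

lemma linearDisjointOver_ultrapower (C : Subfield K) :
    LinearDisjointOver (C.map (algebraMap K (Germ (φ : Filter ι) K)))
      ((⊤ : Subfield K).map (algebraMap K (Germ (φ : Filter ι) K))) (ultrapower φ C) := by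
  rw [linearDisjointOver_iff_linearIndepOn (monotone_map_subfield _ le_top)
    (map_algebraMap_le_ultrapower C), Subfield.coe_map, Set.forall_subset_image_iff]
  intro s _ hs
  rw [linearIndepOn_image_map_subfield] at hs
  rw [← linearIndepOn_iff_image (f := algebraMap K (Germ (φ : Filter ι) K))
    (RingHom.injective _).injOn]
  exact linearIndependent_ultrapower hs

end Ultrapower

section Nullstellensatz

lemma nonempty_algHom_of_finiteType (k R : Type*) [Field k] [IsAlgClosed k] [CommRing R]
    [Nontrivial R] [Algebra k R] [Algebra.FiniteType k R] : Nonempty (R →ₐ[k] k) := by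
  obtain ⟨m, _⟩ := Ideal.exists_maximal R
  let _ := Ideal.Quotient.field m
  have : Module.Finite k (R ⧸ m) := finite_of_finite_type_of_isJacobsonRing k (R ⧸ m)
  let e : k ≃ₐ[k] R ⧸ m := .ofBijective (Algebra.ofId k _)
    IsAlgClosed.algebraMap_bijective_of_isIntegral
  exact ⟨e.symm.toAlgHom.comp (Ideal.Quotient.mkₐ k m)⟩

lemma exists_algHom_ultrapower (k : Type*) {R : Type*} [Field k] [IsAlgClosed k]
    [CommRing R] [Nontrivial R] [Algebra k R] :
    ∃ φ : Ultrafilter (Finset R), Nonempty (R →ₐ[k] Germ (φ : Filter (Finset R)) k) := by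
  classical
  have hpoint (s : Finset R) : Nonempty (Algebra.adjoin k (s : Set R) →ₐ[k] k) :=
    have := (Subalgebra.fg_iff_finiteType _).1 (Subalgebra.fg_adjoin_finset (R := k) s)
    nonempty_algHom_of_finiteType k _
  let e (x : R) (s : Finset R) : k :=
    if h : x ∈ Algebra.adjoin k (s : Set R) then (hpoint s).some ⟨x, h⟩ else 0
  have he {x : R} {s : Finset R} (h : x ∈ Algebra.adjoin k (s : Set R)) :
      e x s = (hpoint s).some ⟨x, h⟩ := dif_pos h
  let φ : Ultrafilter (Finset R) := .of atTop
  have hmem (x : R) : ∀ᶠ s : Finset R in (φ : Filter _), x ∈ Algebra.adjoin k (s : Set R) :=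
    Ultrafilter.of_le atTop <| (eventually_ge_atTop {x}).mono fun s hs ↦
      Algebra.subset_adjoin (hs (Finset.mem_singleton_self x))
  have hconst (c : k) : e (algebraMap k R c) = fun _ ↦ c := funext fun s ↦ by
    rw [he (Subalgebra.algebraMap_mem _ c)]
    exact (hpoint s).some.commutes c
  refine ⟨φ, ⟨{
    toFun x := (e x : Germ (φ : Filter (Finset R)) k)
    map_one' := by rw [← map_one (algebraMap k R), hconst]; rfl
    map_zero' := by rw [← map_zero (algebraMap k R), hconst]; rfl
    map_mul' x y := ?_
    map_add' x y := ?_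
    commutes' c := by rw [hconst, algebraMap_germ]; rfl }⟩⟩
  · refine Germ.coe_eq.2 ?_
    filter_upwards [hmem x, hmem y] with s hx hy
    rw [he (mul_mem hx hy), he hx, he hy, ← map_mul]
    rfl
  · refine Germ.coe_eq.2 ?_
    filter_upwards [hmem x, hmem y] with s hx hy
    rw [he (add_mem hx hy), he hx, he hy, ← map_add]
    rfl

end Nullstellensatz

section Amalgamation

universe u

lemma exists_field_amalgam {A : Type*} {K L : Type u} [Field A] [Field K] [Field L]
    (f : A →+* K) (g : A →+* L) :
    ∃ (Ω : Type u) (_ : Field Ω) (Φ : K →+* Ω) (Ψ : L →+* Ω), Φ.comp f = Ψ.comp g := by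
  let _ := f.toAlgebra
  let _ := g.toAlgebra
  obtain ⟨m, _⟩ := Ideal.exists_maximal (K ⊗[A] L)
  let q := Ideal.Quotient.mk m
  exact ⟨_, Ideal.Quotient.field m, q.comp Algebra.TensorProduct.includeLeftRingHom,
    q.comp Algebra.TensorProduct.includeRight.toRingHom,
    congrArg q.comp Algebra.TensorProduct.includeLeftRingHom_comp_algebraMap⟩

lemma exists_field_amalgam_of_injective {T : Type*} {K L : Type u} [CommRing T] [Field K]
    [Field L] {f : T →+* K} {g : T →+* L} (hf : Function.Injective f)
    (hg : Function.Injective g) :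
    ∃ (Ω : Type u) (_ : Field Ω) (Φ : K →+* Ω) (Ψ : L →+* Ω), Φ.comp f = Ψ.comp g := by
  have : IsDomain T := hf.isDomain f
  obtain ⟨Ω, _, Φ, Ψ, h⟩ := exists_field_amalgam
    (IsFractionRing.lift hf : FractionRing T →+* K) (IsFractionRing.lift hg)
  refine ⟨Ω, _, Φ, Ψ, RingHom.ext fun t ↦ ?_⟩
  simpa using RingHom.congr_fun h (algebraMap T (FractionRing T) t)

lemma injective_productMap {k A B L ι : Type*} [Field k] [CommRing A] [Algebra k A] [Field B]
    [Algebra k B] [Field L] [Algebra k L] {f : A →ₐ[k] L} {g : B →ₐ[k] L} {F : Subfield L}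
    (hg : ∀ y, g y ∈ F) (b : Module.Basis ι k A) (hb : LinearIndependent F (f ∘ b)) :
    Function.Injective (Algebra.TensorProduct.productMap f g) := by
  refine (injective_iff_map_eq_zero _).2 fun x hx ↦ ?_
  obtain ⟨c, rfl⟩ := TensorProduct.eq_repr_basis_left b x
  have hsum : ∑ i ∈ c.support, (⟨g (c i), hg (c i)⟩ : F) • (f ∘ b) i = 0 := by
    rw [← hx, Finsupp.sum, map_sum]
    refine Finset.sum_congr rfl fun i _ ↦ ?_
    rw [Algebra.TensorProduct.productMap_apply_tmul, mul_comm]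
    rfl
  have hc (i) (hi : i ∈ c.support) : c i = 0 :=
    (map_eq_zero g).1 (congrArg Subtype.val (linearIndependent_iff'.1 hb _ _ hsum i hi))
  exact Finset.sum_eq_zero fun i hi ↦ by simp only [hc i hi, TensorProduct.tmul_zero]

lemma exists_amalgam_ultrapower {K : Type u} [Field K] {k P Q : Subfield K} [IsAlgClosed k]
    (hP : k ≤ P) (hQ : k ≤ Q) (h : LinearDisjointOver k P Q) :
    ∃ (ι : Type u) (φ : Ultrafilter ι) (Ω : Type u) (_ : Field Ω) (Φ : K →+* Ω)
      (Ψ : Germ (φ : Filter ι) K →+* Ω),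
      (∀ x ∈ P, Φ x = Ψ (algebraMap K _ x)) ∧ Q.map Φ ≤ (ultrapower φ k).map Ψ := by
  let P' := Subfield.extendScalars hP
  let Q' := Subfield.extendScalars hQ
  let b := Module.Basis.ofVectorSpace k P'
  obtain ⟨φ, ⟨q⟩⟩ := exists_algHom_ultrapower k (R := Q')
  let p : P' →ₐ[k] Germ (φ : Filter (Finset Q')) K := (IsScalarTower.toAlgHom k K _).comp P'.val
  let qK : Q' →ₐ[k] Germ (φ : Filter (Finset Q')) K := (germMap _ (Algebra.ofId k K)).comp q
  have hqK (y : Q') : qK y ∈ ultrapower φ k := ⟨q y, rfl⟩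
  have hb : LinearIndependent Q (P'.val ∘ b) :=
    ((linearDisjointOver_iff_intermediateField hP hQ).1 h).linearIndependent_left
      b.linearIndependent
  have hb' : LinearIndependent k (P'.val ∘ b) :=
    b.linearIndependent.map' P'.val.toLinearMap (LinearMap.ker_eq_bot.2 Subtype.val_injective)
  obtain ⟨Ω, _, Φ, Ψ, hΦΨ⟩ := exists_field_amalgam_of_injective
    (f := (Algebra.TensorProduct.productMap P'.val Q'.val).toRingHom)
    (g := (Algebra.TensorProduct.productMap p qK).toRingHom)
    (injective_productMap (F := Q) (fun y ↦ y.2) b hb)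
    (injective_productMap hqK b (linearIndependent_ultrapower hb'))
  refine ⟨_, φ, Ω, _, Φ, Ψ, fun x hx ↦ ?_, ?_⟩
  · have := RingHom.congr_fun hΦΨ ((⟨x, hx⟩ : P') ⊗ₜ 1)
    simpa [p] using this
  · rintro _ ⟨y, hy, rfl⟩
    have := RingHom.congr_fun hΦΨ (1 ⊗ₜ (⟨y, hy⟩ : Q'))
    refine ⟨_, hqK ⟨y, hy⟩, ?_⟩
    simpa using this.symm

end Amalgamation

lemma linearDisjointOver_iSup_algCl_sup {K J : Type*} [Field K] {k P Q : Subfield K} [IsAlgClosed k]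
    (hP : k ≤ P) (hQ : k ≤ Q) (h : LinearDisjointOver k P Q) {D : J → Subfield K}
    (hkD : ∀ j, k ≤ D j) (hDP : ∀ j, D j ≤ P) (hD : ∀ j, IsAlgClosed (D j)) :
    LinearDisjointOver (⨆ j, D j) (⨆ j, algCl (D j ⊔ Q)) P := by
  obtain ⟨ι, φ, Ω, _, Φ, Ψ, hΦP, hΦQ⟩ := exists_amalgam_ultrapower hP hQ h
  set C := ⨆ j, D j
  have hCP : C ≤ P := iSup_le hDP
  have hC : C ≤ ⨆ j, algCl (D j ⊔ Q) := iSup_mono fun j ↦ le_sup_left.trans (le_algCl _)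
  have map_eq {E : Subfield K} (hE : E ≤ P) : E.map Φ = (E.map (algebraMap K _)).map Ψ := by
    rw [Subfield.map_map]
    exact SetLike.ext' (Set.image_congr fun x hx ↦ hΦP x (hE hx))
  have hDQ (j) : (algCl (D j ⊔ Q)).map Φ ≤ (ultrapower φ C).map Ψ := by
    have hDj : (D j).map Φ ≤ (ultrapower φ (D j)).map Ψ :=
      (map_eq (hDP j)).trans_le (monotone_map_subfield Ψ (map_algebraMap_le_ultrapower _))
    have hQj : Q.map Φ ≤ (ultrapower φ (D j)).map Ψ :=
      hΦQ.trans (monotone_map_subfield Ψ (ultrapower_mono (hkD j)))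
    calc (algCl (D j ⊔ Q)).map Φ
        ≤ algCl ((D j ⊔ Q).map Φ) := map_algCl_le _ _
      _ ≤ algCl ((ultrapower φ (D j)).map Ψ) :=
          algCl_mono ((Subfield.map_sup _ _ _).trans_le (sup_le hDj hQj))
      _ = (ultrapower φ (D j)).map Ψ := algCl_map_ultrapower Ψ (D j)
      _ ≤ (ultrapower φ C).map Ψ := monotone_map_subfield Ψ (ultrapower_mono (le_iSup D j))
  have hdisj := (linearDisjointOver_map_iff Ψ (monotone_map_subfield _ le_top)
    (map_algebraMap_le_ultrapower C)).2 (linearDisjointOver_ultrapower C)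
  rw [← linearDisjointOver_map_iff Φ hC hCP, map_eq hCP, map_eq le_rfl, Subfield.map_iSup Φ]
  exact (hdisj.mono (monotone_map_subfield Ψ (monotone_map_subfield _ le_top)) (iSup_le hDQ)).symm

section Systems

variable {K V : Type*} [Field K] [DecidableEq V] {S : Finset V → Subfield K}
  {I J : Set (Finset V)} {u : Finset V}

lemma le_of_forall_mem_subset_le (hI : ∀ v ∉ I, S v ≤ ⨆ w ∈ v.ssubsets, S w) {F : Subfield K}
    (hF : ∀ v ∈ I, v ⊆ u → S v ≤ F) : S u ≤ F := by
  induction u using Finset.strongInduction with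
  | H u ih =>
    by_cases hu : u ∈ I
    · exact hF u hu subset_rfl
    · refine (hI u hu).trans (iSup₂_le fun w hw ↦ ?_)
      have hwu := Finset.mem_ssubsets.1 hw
      exact ih w hwu fun v hv hvw ↦ hF v hv (hvw.trans hwu.subset)

lemma sup_iSup_interFamily_eq (hI : ∀ v ∉ I, S v ≤ ⨆ w ∈ v.ssubsets, S w) :
    S u ⊔ ⨆ v ∈ interFamily J u ∪ interFamily I u, algCl (S v) =
      ⨆ v : ↥(J ∪ I), algCl (S (v ∩ u)) := by
  have le_iSup_inter (v) (hv : v ∈ J ∪ I) :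
      algCl (S (v ∩ u)) ≤ ⨆ v : ↥(J ∪ I), algCl (S (v ∩ u)) :=
    le_iSup_of_le ⟨v, hv⟩ le_rfl
  refine le_antisymm (sup_le ?_ (iSup₂_le ?_)) (iSup_le ?_)
  · refine le_of_forall_mem_subset_le hI fun v hv hvu ↦ ?_
    calc S v = S (v ∩ u) := by rw [Finset.inter_eq_left.2 hvu]
      _ ≤ algCl (S (v ∩ u)) := le_algCl _
      _ ≤ _ := le_iSup_inter v (.inr hv)
  · rintro _ (⟨v, hv, rfl⟩ | ⟨v, hv, rfl⟩)
    exacts [le_iSup_inter v (.inl hv), le_iSup_inter v (.inr hv)]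
  · rintro ⟨v, hv⟩
    exact le_sup_of_le_right
      (le_iSup₂_of_le (v ∩ u) (hv.imp (⟨v, ·, rfl⟩) (⟨v, ·, rfl⟩)) le_rfl)

lemma sup_iSup_union_interFamily_le (hS : Monotone S)
    (hI : ∀ v ∉ I, S v ≤ ⨆ w ∈ v.ssubsets, S w) (w : Finset V) :
    S w ⊔ ⨆ v ∈ J ∪ interFamily I u, algCl (S v) ≤ ⨆ v : ↥(J ∪ I), algCl (S v) := by
  have le_iSup_algCl (v) (hv : v ∈ J ∪ I) : algCl (S v) ≤ ⨆ v : ↥(J ∪ I), algCl (S v) :=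
    le_iSup_of_le ⟨v, hv⟩ le_rfl
  refine sup_le ?_ (iSup₂_le ?_)
  · exact le_of_forall_mem_subset_le hI fun v hv _ ↦
      (le_algCl _).trans (le_iSup_algCl v (.inr hv))
  · rintro _ (hv | ⟨v, hv, rfl⟩)
    · exact le_iSup_algCl _ (.inl hv)
    · exact (algCl_mono (hS Finset.inter_subset_left)).trans (le_iSup_algCl v (.inr hv))

theorem linear_disjointness_in_systems_general [IsAlgClosed K] [Fintype V] (hS : Monotone S)
    (hunion : ∀ v w, S (v ∪ w) ≤ algCl (S v ⊔ S w))
    (hI : ∀ v ∉ I, S v ≤ ⨆ w ∈ v.ssubsets, S w)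
    (hu : LinearDisjointOver (algCl (S ∅)) (algCl (S u)) (algCl (S uᶜ))) (J : Set (Finset V)) :
    LinearDisjointOver
      (S u ⊔ ⨆ v ∈ interFamily J u ∪ interFamily I u, algCl (S v))
      (S Finset.univ ⊔ ⨆ v ∈ J ∪ interFamily I u, algCl (S v))
      (algCl (S u)) := by
  have algCl_S_mono : Monotone fun v ↦ algCl (S v) := algCl_mono.comp hS
  have := isAlgClosed_algCl (S ∅)
  have hcore := linearDisjointOver_iSup_algCl_sup (J := ↥(J ∪ I))
    (D := fun v ↦ algCl (S (v ∩ u))) (algCl_S_mono (Finset.empty_subset _))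
    (algCl_S_mono (Finset.empty_subset _)) hu (fun _ ↦ algCl_S_mono (Finset.empty_subset _))
    (fun _ ↦ algCl_S_mono Finset.inter_subset_right) (fun _ ↦ isAlgClosed_algCl _)
  have hsplit (v : Finset V) : algCl (S v) ≤ algCl (algCl (S (v ∩ u)) ⊔ algCl (S uᶜ)) :=
    algCl_le_algCl <| calc
      S v = S (v ∩ u ∪ v ∩ uᶜ) := by
        rw [← Finset.inter_union_distrib_left, Finset.union_compl, Finset.inter_univ]
      _ ≤ algCl (S (v ∩ u) ⊔ S (v ∩ uᶜ)) := hunion _ _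
      _ ≤ _ := algCl_mono
        (sup_le_sup (le_algCl _) ((hS Finset.inter_subset_right).trans (le_algCl _)))
  rw [sup_iSup_interFamily_eq hI]
  exact hcore.mono ((sup_iSup_union_interFamily_le hS hI _).trans (iSup_mono fun v ↦ hsplit v))
    le_rfl

end Systems

lemma invCl_eq_self_of_map_eq {K : Type*} [Field K] {σ : K ≃+* K} {A : Subfield K}
    (hA : A.map (σ : K →+* K) = A) : invCl σ A = A := by
  refine le_antisymm (sInf_le ⟨le_rfl, fun x hx ↦ hA.le ⟨x, hx, rfl⟩, fun x hx ↦ ?_⟩)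
    (le_sInf fun _ hF ↦ hF.1)
  obtain ⟨y, hy, rfl⟩ := hA.ge hx
  exact (σ.symm_apply_apply y).symm ▸ hy

lemma le_invCl {K : Type*} [Field K] (σ : K ≃+* K) (E : Subfield K) : E ≤ invCl σ E :=
  le_sInf fun _ hF ↦ hF.1

lemma IsFiniteGaloisExt.le_algCl {K : Type*} [Field K] {F E : Subfield K}
    (h : IsFiniteGaloisExt F E) : E ≤ algCl F := by
  obtain ⟨hFE, hfin, -⟩ := h
  let _ : Algebra F E := (Subfield.inclusion hFE).toAlgebra
  intro x hx
  exact mem_algCl.2 <| (Algebra.IsAlgebraic.isAlgebraic (⟨x, hx⟩ : E)).ringHom_of_comp_eq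
    (RingHom.id F) E.subtype Function.injective_id rfl

namespace DiffFieldSystem

variable {K : Type*} [Field K] {σ : K ≃+* K} {V : Type*} [Fintype V] [DecidableEq V]
  {A : Subfield K} (𝒮 : DiffFieldSystem σ V A)

lemma monotone_S : Monotone 𝒮.S := fun _ _ ↦ 𝒮.mono

lemma S_le_algCl_iSup_singleton (u : Finset V) : 𝒮.S u ≤ algCl (A ⊔ ⨆ i ∈ u, 𝒮.S {i}) := by
  induction u using Finset.strongInduction with
  | H u ih =>
    obtain hu | hu := le_or_gt 2 u.card
    · refine (𝒮.galois u hu).le_algCl.trans (algCl_le_algCl (iSup₂_le fun v hv ↦ ?_))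
      have hvu : v ⊂ u := Finset.mem_ssubsets.1 hv
      exact (ih v hvu).trans
        (algCl_mono (sup_le_sup_left (biSup_mono fun i hi ↦ hvu.subset hi) A))
    · refine le_trans ?_ (le_algCl _)
      obtain rfl | hne := u.eq_empty_or_nonempty
      · exact le_sup_of_le_left 𝒮.empty_eq.le
      · obtain ⟨i, rfl⟩ := Finset.card_eq_one.1 ((Nat.le_of_lt_succ hu).antisymm hne.card_pos)
        exact le_sup_of_le_right (le_iSup₂_of_le i (Finset.mem_singleton_self i) le_rfl)

lemma S_union_le_algCl (v w : Finset V) : 𝒮.S (v ∪ w) ≤ algCl (𝒮.S v ⊔ 𝒮.S w) := by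
  refine (𝒮.S_le_algCl_iSup_singleton _).trans (algCl_mono (sup_le ?_ (iSup₂_le fun i hi ↦ ?_)))
  · exact le_sup_of_le_left (𝒮.empty_eq.ge.trans (𝒮.mono (Finset.empty_subset v)))
  · obtain hi | hi := Finset.mem_union.1 hi
    · exact le_sup_of_le_left (𝒮.mono (Finset.singleton_subset_iff.2 hi))
    · exact le_sup_of_le_right (𝒮.mono (Finset.singleton_subset_iff.2 hi))

lemma linearDisjointOver_algCl_of_disjoint (hA : A.map (σ : K →+* K) = A) {v w : Finset V}
    (hvw : Disjoint v w) :
    LinearDisjointOver (algCl A) (algCl (𝒮.S v)) (algCl (𝒮.S w)) := by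
  have hle (w : Finset V) :
      algCl (𝒮.S w) ≤ algCl (invCl σ (A ⊔ (⨆ i ∈ w, 𝒮.S {i}) ⊔ A)) :=
    (algCl_le_algCl (𝒮.S_le_algCl_iSup_singleton w)).trans
      (algCl_mono (le_sup_left.trans (le_invCl σ _)))
  have hindep := 𝒮.indep v w hvw
  rw [IndependentOver, invCl_eq_self_of_map_eq hA] at hindep
  exact hindep.mono (hle v) (hle w)

end DiffFieldSystem

/-- (Lemma on linear disjointness in systems.) If `𝒮` is an
`I`-system of difference fields on `V` over `A`, `u ⊆ V`, and `J` is any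
collection of subsets of `V`, then `S(V)·∏_{v ∈ J ∪ I_u} S(v)^{alg}` is linearly
disjoint from `S(u)^{alg}` over `S(u)·∏_{v ∈ J_u ∪ I_u} S(v)^{alg}`. -/
theorem linear_disjointness_in_systems
    {K : Type*} [Field K] [IsAlgClosed K] (σ : K ≃+* K)
    {V : Type*} [Fintype V] [DecidableEq V]
    (A : Subfield K) (hAperf : PerfectField A) (hAinv : A.map (σ : K →+* K) = A)
    (I : Set (Finset V)) (hI : IsSimplicialComplexOn V I)
    (𝒮 : DiffFieldSystem σ V A) (h𝒮 : 𝒮.IsOn I)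
    (u : Finset V) (J : Set (Finset V)) :
    LinearDisjointOver
      (𝒮.S u ⊔ ⨆ v ∈ interFamily J u ∪ interFamily I u, algCl (𝒮.S v))
      (𝒮.S Finset.univ ⊔ ⨆ v ∈ J ∪ interFamily I u, algCl (𝒮.S v))
      (algCl (𝒮.S u)) := by
  refine linear_disjointness_in_systems_general 𝒮.monotone_S 𝒮.S_union_le_algCl
    (fun v hv ↦ (h𝒮 v hv).le) ?_ J
  rw [𝒮.empty_eq]
  exact 𝒮.linearDisjointOver_algCl_of_disjoint hAinv disjoint_compl_right
end
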